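/- arXiv:2106.15982 — 3 statements merged into one kernel-verified Lean document; each statement's English description precedes it below -/
import Mathlib

section
/- Let G be a group with a finite symmetric generating set S' not containing the identity, and let Γ be the associated Cayley graph. Assume V(r) ≥ C r^D for all r ≥ 1, for some constant C > 0 and some D ≥ 3 (so the Sobolev inequality ‖u‖_q ≤ C_{p,q} ‖u‖_{D^{1,p}} holds for 1 ≤ p < D and q ≥ Dp/(D−p)). Fix 1 ≤ p < D and q > Dp/(D−p), and set S := inf{‖u‖_{D^{1,p}}^p : u ∈ D^{1,p}(Γ), ‖u‖_q = 1}. Let {u_n} ⊂ D^{1,p}(Γ) be a minimizing sequence with ‖u_n‖_q = 1 and ‖u_n‖_{D^{1,p}}^p → S. Then there exists a sequence {g_n} ⊂ G such that the translated sequence v_n(g) := u_n(g_n g) contains a subsequence converging in the D^{1,p}-norm to some v with ‖v‖_q = 1 and ‖v‖_{D^{1,p}}^p = S; in particular S is attained. -/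
/-!
The proof combines the critical Sobolev inequality with a Brezis–Lieb argument.

*Sobolev inequality.* Translating a function `w` on the right by a word of length `r` costs at most
`r ^ p` times its energy. If `w` is supported in a finite set `A₀` and a ball of radius `r` has at
least `2 |A₀|` elements, then half of the translates of each point leave `A₀`; with the volume growth
this gives the Faber–Krahn type inequality `exists_card_mul_rpow_le` for level sets. Applying it to
all dyadic slices of `|u|`, whose energies add up to at most that of `u`, yields the
inequality for `p* = Dp / (D - p)` directly for every `1 ≤ p < D` (`exists_sobolev`).

*Compactness.* A minimizing sequence is bounded in `ℓ^{p*}`, and as `q > p*` this bounds its sup norm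
below (`exists_lt_abs`); so after translation the values at `1` stay away from `0`. A diagonal
subsequence converges pointwise to some `v ≠ 0`. By the Brezis–Lieb lemma the mass `‖·‖_q^q` and the
energy both split asymptotically between `v` and the remainder. Each part obeys the Sobolev
inequality with optimal constant `S > 0`, so `a = ‖v‖_q^q` satisfies `(1 - a) ^ (p/q) + a ^ (p/q) ≤ 1`.
Since `p / q < 1`, strict concavity forces `a = 1`, and then the energy of the remainder tends
to `0`.
-/

open Filter Topology

noncomputable section

section Cayley

variable {G : Type*} [Group G]

/-- Adjacency in the Cayley graph of `G` with (symmetric) generating set `S'`: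
`g ∼ h` iff `g⁻¹ * h ∈ S'`. -/
def cadj (S' : Finset G) (g h : G) : Prop := g⁻¹ * h ∈ S'

/-- `|∇u(g)|_p^p = Σ_{h ∼ g} |u(h) - u(g)|^p` on the Cayley graph. -/
def cGradPow (S' : Finset G) (p : ℝ) (u : G → ℝ) (g : G) : ℝ :=
  ∑' h : {h : G // cadj S' g h}, |u h.1 - u g| ^ p

/-- `‖u‖_{D^{1,p}}^p` on the Cayley graph. -/
def cDSumPow (S' : Finset G) (p : ℝ) (u : G → ℝ) : ℝ := ∑' g, cGradPow S' p u g

/-- `‖u‖_{D^{1,p}}` on the Cayley graph. -/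
def cDnorm (S' : Finset G) (p : ℝ) (u : G → ℝ) : ℝ := cDSumPow S' p u ^ (1 / p)

/-- `‖u‖_q` on `G`. -/
def clpNorm (q : ℝ) (u : G → ℝ) : ℝ := (∑' g, |u g| ^ q) ^ (1 / q)

/-- `u ∈ ℓ^q(G)`. -/
def cMemlp (q : ℝ) (u : G → ℝ) : Prop := Summable fun g => |u g| ^ q

/-- `u ∈ D^{1,p}(Γ)`, identified with `{u ∈ ℓ^{Dp/(D-p)} : ‖u‖_{D^{1,p}} < ∞}`. -/
def cMemD (S' : Finset G) (p pstar : ℝ) (u : G → ℝ) : Prop :=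
  cMemlp pstar u ∧ Summable fun g => cGradPow S' p u g

/-- The word length of `g` w.r.t. the generating set `S'`. -/
def wordLength (S' : Finset G) (g : G) : ℕ :=
  sInf {n : ℕ | ∃ l : List G, (∀ x ∈ l, x ∈ S') ∧ l.length = n ∧ l.prod = g}

/-- `V(r)`: the number of group elements of word length at most `r`. -/
def ballCard (S' : Finset G) (r : ℕ) : ℕ := Nat.card {g : G | wordLength S' g ≤ r}

end Cayley

/-! ### Power sums and the Brezis–Lieb lemma -/


/-- Convexity of `t ↦ t ^ p` with weights close to `1` and `0`: the coefficient of `a ^ p` can be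
taken arbitrarily close to `1`. -/
lemma exists_add_rpow_le {p ε : ℝ} (hp : 1 ≤ p) (hε : 0 < ε) :
    ∃ K : ℝ, 0 ≤ K ∧ ∀ a b : ℝ, 0 ≤ a → 0 ≤ b →
      (a + b) ^ p ≤ (1 + ε) * a ^ p + K * b ^ p := by
  have hp0 : 0 < p := by linarith
  -- The weight `s` is chosen so that `s ^ p = (1 + ε)⁻¹`.
  set s : ℝ := (1 + ε) ^ (-(1 / p)) with hs
  have hs0 : 0 < s := by positivity
  have hs1 : s < 1 := Real.rpow_lt_one_of_one_lt_of_neg (by linarith) (by simp; positivity)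
  have hsp : s ^ p = (1 + ε)⁻¹ := by
    rw [hs, ← Real.rpow_mul (by positivity), show -(1 / p) * p = -1 by field_simp,
      Real.rpow_neg_one]
  have ht0 : 0 < 1 - s := by linarith
  refine ⟨(1 - s) / (1 - s) ^ p, by positivity, fun a b ha hb => ?_⟩
  have h := (convexOn_rpow hp).2 (x := a / s) (by simp; positivity) (y := b / (1 - s))
    (by simp; positivity) hs0.le ht0.le (by ring)
  simp only [smul_eq_mul] at h
  rw [mul_div_cancel₀ _ hs0.ne', mul_div_cancel₀ _ ht0.ne', Real.div_rpow ha hs0.le,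
    Real.div_rpow hb ht0.le, hsp] at h
  have h2 : s * (a ^ p / (1 + ε)⁻¹) ≤ (1 + ε) * a ^ p := by
    rw [div_inv_eq_mul]
    have : 0 ≤ a ^ p * (1 + ε) := by positivity
    nlinarith
  calc (a + b) ^ p ≤ _ := h
    _ ≤ (1 + ε) * a ^ p + (1 - s) * (b ^ p / (1 - s) ^ p) := by gcongr
    _ = _ := by ring

lemma exists_abs_rpow_sub_le {p ε : ℝ} (hp : 1 ≤ p) (hε : 0 < ε) :
    ∃ K : ℝ, 0 ≤ K ∧ ∀ a b : ℝ, |(|a + b| ^ p - |a| ^ p)| ≤ ε * |a| ^ p + K * |b| ^ p := by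
  have hp0 : 0 ≤ p := by linarith
  set δ := min (ε / 2) 1 with hδ
  have hδ0 : 0 < δ := by positivity
  have hδ1 : δ ≤ 1 := min_le_right _ _
  have hδ2 : δ ≤ ε / 2 := min_le_left _ _
  obtain ⟨K, hK, h⟩ := exists_add_rpow_le hp hδ0
  refine ⟨2 * K, by positivity, fun a b => ?_⟩
  have h1 : |a + b| ^ p ≤ (1 + δ) * |a| ^ p + K * |b| ^ p :=
    (Real.rpow_le_rpow (abs_nonneg _) (abs_add_le a b) hp0).trans
      (h _ _ (abs_nonneg _) (abs_nonneg _))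
  have h2 : |a| ^ p ≤ (1 + δ) * |a + b| ^ p + K * |b| ^ p := by
    refine (Real.rpow_le_rpow (abs_nonneg _) ?_ hp0).trans (h _ _ (abs_nonneg _) (abs_nonneg _))
    have := abs_sub (a + b) b
    simpa using this
  have hA : 0 ≤ |a| ^ p := by positivity
  have hB : 0 ≤ K * |b| ^ p := by positivity
  have hAB : 0 ≤ |a + b| ^ p := by positivity
  rw [abs_le]
  constructor
  · nlinarith [mul_le_mul_of_nonneg_left h1 hδ0.le, mul_nonneg hδ0.le hA, mul_nonneg hδ0.le hB]
  · nlinarith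

lemma summable_abs_sub_rpow {ι : Type*} {p : ℝ} (hp : 1 ≤ p) {f g : ι → ℝ}
    (hf : Summable fun i => |f i| ^ p) (hg : Summable fun i => |g i| ^ p) :
    Summable fun i => |f i - g i| ^ p := by
  refine Summable.of_nonneg_of_le (fun i => by positivity) (fun i => ?_)
    (Real.Lp_add_le_tsum_of_nonneg hp (fun i => abs_nonneg (f i)) (fun i => abs_nonneg (g i))
      hf hg).1
  exact Real.rpow_le_rpow (abs_nonneg _) (abs_sub _ _) (by linarith)

/-- Fatou's lemma for `p`-th power sums. -/
lemma summable_and_tsum_le_of_tendsto {ι : Type*} {p M : ℝ} (hp : 1 ≤ p) {f : ℕ → ι → ℝ}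
    {g : ι → ℝ} (hf : ∀ n, Summable fun i => |f n i| ^ p) (hM : ∀ n, ∑' i, |f n i| ^ p ≤ M)
    (hlim : ∀ i, Tendsto (fun n => f n i) atTop (𝓝 (g i))) :
    (Summable fun i => |g i| ^ p) ∧ ∑' i, |g i| ^ p ≤ M := by
  have key : ∀ s : Finset ι, ∑ i ∈ s, |g i| ^ p ≤ M := fun s => by
    refine le_of_tendsto (f := fun n => ∑ i ∈ s, |f n i| ^ p)
      (tendsto_finsetSum _ fun i _ => ((hlim i).abs.rpow_const (Or.inr (by linarith))))
      (Eventually.of_forall fun n => ?_)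
    exact ((hf n).sum_le_tsum s fun i _ => by positivity).trans (hM n)
  have hs := summable_of_sum_le (fun i => by positivity) key
  exact ⟨hs, hs.tsum_le_of_sum_le key⟩

/-- **Brezis–Lieb lemma** for `p`-th power sums of a bounded, pointwise convergent sequence. -/
lemma brezis_lieb {ι : Type*} {p M : ℝ} (hp : 1 ≤ p) {f : ℕ → ι → ℝ}
    {g : ι → ℝ} (hf : ∀ n, Summable fun i => |f n i| ^ p) (hM : ∀ n, ∑' i, |f n i| ^ p ≤ M)
    (hlim : ∀ i, Tendsto (fun n => f n i) atTop (𝓝 (g i))) :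
    Tendsto (fun n => ∑' i, |f n i| ^ p - ∑' i, |f n i - g i| ^ p) atTop
      (𝓝 (∑' i, |g i| ^ p)) := by
  have hp0 : 0 < p := by linarith
  obtain ⟨hg, hgM⟩ := summable_and_tsum_le_of_tendsto hp hf hM hlim
  have hM0 : 0 ≤ M := le_trans (tsum_nonneg fun i => by positivity) (hM 0)
  have hfg : ∀ n, Summable fun i => |f n i - g i| ^ p := fun n => summable_abs_sub_rpow hp (hf n) hg
  obtain ⟨K₁, hK₁, h₁⟩ := exists_add_rpow_le hp one_pos
  set M' : ℝ := 2 * M + K₁ * M with hM'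
  have hM'0 : 0 ≤ M' := by positivity
  have hfgM : ∀ n, ∑' i, |f n i - g i| ^ p ≤ M' := fun n => by
    calc ∑' i, |f n i - g i| ^ p ≤ ∑' i, (2 * |f n i| ^ p + K₁ * |g i| ^ p) := by
          refine (hfg n).tsum_le_tsum (fun i => ?_) (((hf n).mul_left 2).add (hg.mul_left K₁))
          refine (Real.rpow_le_rpow (abs_nonneg _) (abs_sub _ _) hp0.le).trans ?_
          have := h₁ _ _ (abs_nonneg (f n i)) (abs_nonneg (g i))
          linarith
      _ = 2 * ∑' i, |f n i| ^ p + K₁ * ∑' i, |g i| ^ p := by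
          rw [((hf n).mul_left 2).tsum_add (hg.mul_left K₁), tsum_mul_left, tsum_mul_left]
      _ ≤ M' := by
          have := mul_le_mul_of_nonneg_left hgM hK₁
          rw [hM']
          linarith [hM n]
  rw [Metric.tendsto_atTop]
  intro η hη
  set ε : ℝ := η / (2 * (M' + 1)) with hε
  have hε0 : 0 < ε := by positivity
  obtain ⟨K, hK, h⟩ := exists_abs_rpow_sub_le hp hε0
  set d : ℕ → ι → ℝ := fun n i => |f n i| ^ p - |f n i - g i| ^ p - |g i| ^ p with hd
  set W : ℕ → ι → ℝ := fun n i => max (|d n i| - ε * |f n i - g i| ^ p) 0 with hW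
  have hdle : ∀ n i, |d n i| ≤ ε * |f n i - g i| ^ p + (K + 1) * |g i| ^ p := fun n i => by
    have h1 := h (f n i - g i) (g i)
    rw [sub_add_cancel] at h1
    have h2 : |d n i| ≤ |(|f n i| ^ p - |f n i - g i| ^ p)| + |(|g i| ^ p)| := abs_sub _ _
    rw [abs_of_nonneg (a := |g i| ^ p) (by positivity)] at h2
    linarith
  have hWle : ∀ n i, ‖W n i‖ ≤ (K + 1) * |g i| ^ p := fun n i => by
    rw [Real.norm_of_nonneg (le_max_right _ _)]
    refine max_le ?_ (by positivity)
    linarith [hdle n i]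
  have hgK : Summable fun i => (K + 1) * |g i| ^ p := hg.mul_left _
  have hWlim : ∀ i, Tendsto (fun n => W n i) atTop (𝓝 0) := fun i => by
    have e1 : Tendsto (fun n => |f n i| ^ p) atTop (𝓝 (|g i| ^ p)) :=
      (hlim i).abs.rpow_const (Or.inr hp0.le)
    have e2 : Tendsto (fun n => |f n i - g i| ^ p) atTop (𝓝 (|g i - g i| ^ p)) :=
      ((hlim i).sub_const (g i)).abs.rpow_const (Or.inr hp0.le)
    rw [sub_self, abs_zero, Real.zero_rpow hp0.ne'] at e2
    have e3 := ((((e1.sub e2).sub_const (|g i| ^ p)).abs).sub (e2.const_mul ε)).max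
      (tendsto_const_nhds (x := (0 : ℝ)))
    simpa using e3
  have hWt := tendsto_tsum_of_dominated_convergence hgK hWlim
    (Eventually.of_forall fun n => hWle n)
  rw [tsum_zero] at hWt
  obtain ⟨N, hN⟩ := Metric.tendsto_atTop.1 hWt (η / 2) (by positivity)
  refine ⟨N, fun n hn => ?_⟩
  have hWs : Summable (W n) := Summable.of_norm_bounded hgK (hWle n)
  have hWn : ∑' i, W n i < η / 2 := by
    have := hN n hn
    rw [Real.dist_0_eq_abs] at this
    exact (le_abs_self _).trans_lt this
  have hds : Summable (d n) := ((hf n).sub (hfg n)).sub hg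
  have hdt : ∑' i, |f n i| ^ p - ∑' i, |f n i - g i| ^ p - ∑' i, |g i| ^ p = ∑' i, d n i := by
    rw [((hf n).sub (hfg n)).tsum_sub hg, (hf n).tsum_sub (hfg n)]
  rw [Real.dist_eq, hdt]
  calc |∑' i, d n i| ≤ ∑' i, |d n i| := by
        simpa using norm_tsum_le_tsum_norm (f := d n) hds.abs
    _ ≤ ∑' i, (W n i + ε * |f n i - g i| ^ p) := by
        refine hds.abs.tsum_le_tsum (fun i => ?_) (hWs.add ((hfg n).mul_left ε))
        have : |d n i| - ε * |f n i - g i| ^ p ≤ W n i := le_max_left _ _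
        linarith
    _ = ∑' i, W n i + ε * ∑' i, |f n i - g i| ^ p := by
        rw [hWs.tsum_add ((hfg n).mul_left ε), tsum_mul_left]
    _ ≤ ∑' i, W n i + ε * M' := by
        have := hfgM n
        gcongr
    _ < η / 2 + η / 2 := by
        refine add_lt_add_of_lt_of_le hWn ?_
        rw [hε, div_mul_eq_mul_div, div_le_div_iff₀ (by positivity) (by positivity)]
        nlinarith
    _ = η := by ring

/-! ### Energy on the Cayley graph and the Faber–Krahn inequality -/

section Sobolev

variable {G : Type*} [Group G]

lemma cGradPow_eq_sum (S' : Finset G) (p : ℝ) (u : G → ℝ) (g : G) :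
    cGradPow S' p u g = ∑ s ∈ S', |u (g * s) - u g| ^ p := by
  rw [← Finset.tsum_subtype S' fun s => |u (g * s) - u g| ^ p]
  let e : {h : G // cadj S' g h} ≃ {s : G // s ∈ S'} :=
    (Equiv.mulLeft g⁻¹).subtypeEquiv fun h => by simp [cadj]
  rw [cGradPow, ← e.tsum_eq]
  refine tsum_congr fun h => ?_
  change _ = |u (g * (g⁻¹ * h.1)) - u g| ^ p
  rw [mul_inv_cancel_left]

lemma summable_cGradPow_iff (S' : Finset G) (p : ℝ) (u : G → ℝ) :
    (Summable fun g => cGradPow S' p u g) ↔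
      ∀ s ∈ S', Summable fun g => |u (g * s) - u g| ^ p := by
  simp only [cGradPow_eq_sum]
  refine ⟨fun h s hs => ?_, fun h => summable_sum h⟩
  exact Summable.of_nonneg_of_le (fun g => by positivity)
    (fun g => Finset.single_le_sum (f := fun s => |u (g * s) - u g| ^ p)
      (fun s _ => by positivity) hs) h

lemma cDSumPow_eq_sum {S' : Finset G} {p : ℝ} {u : G → ℝ}
    (h : ∀ s ∈ S', Summable fun g => |u (g * s) - u g| ^ p) :
    cDSumPow S' p u = ∑ s ∈ S', ∑' g, |u (g * s) - u g| ^ p := by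
  simp only [cDSumPow, cGradPow_eq_sum]
  exact Summable.tsum_finsetSum h

/-- Moving by a word of length `n` costs at most `n` times the cost of moving along one edge. -/
lemma summable_and_tsum_translate_le {S' : Finset G} {p F : ℝ} (hp : 1 ≤ p)
    {w : G → ℝ}
    (h : ∀ s ∈ S', (Summable fun g => |w (g * s) - w g| ^ p) ∧
      ∑' g, |w (g * s) - w g| ^ p ≤ F)
    (l : List G) (hl : ∀ x ∈ l, x ∈ S') :
    (Summable fun g => |w (g * l.prod) - w g| ^ p) ∧
      (∑' g, |w (g * l.prod) - w g| ^ p) ^ (1 / p) ≤ l.length * F ^ (1 / p) := by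
  have hp0 : 0 < p := by linarith
  induction l with
  | nil => simp [Real.zero_rpow hp0.ne', Real.zero_rpow (inv_pos.2 hp0).ne']
  | cons s l ih =>
    obtain ⟨ih1, ih2⟩ := ih fun x hx => hl x (List.mem_cons_of_mem _ hx)
    obtain ⟨hs1, hs2⟩ := h s (hl s List.mem_cons_self)
    have e1 : Summable fun g => |w (g * s * l.prod) - w (g * s)| ^ p :=
      (Equiv.mulRight s).summable_iff.2 ih1
    have e2 : ∑' g, |w (g * s * l.prod) - w (g * s)| ^ p = ∑' g, |w (g * l.prod) - w g| ^ p :=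
      (Equiv.mulRight s).tsum_eq fun g => |w (g * l.prod) - w g| ^ p
    obtain ⟨m1, m2⟩ := Real.Lp_add_le_tsum_of_nonneg hp
      (fun g => abs_nonneg (w (g * s * l.prod) - w (g * s)))
      (fun g => abs_nonneg (w (g * s) - w g)) e1 hs1
    have hle : ∀ g, |w (g * (s :: l).prod) - w g| ^ p ≤
        (|w (g * s * l.prod) - w (g * s)| + |w (g * s) - w g|) ^ p := fun g => by
      rw [List.prod_cons, ← mul_assoc]
      exact Real.rpow_le_rpow (abs_nonneg _) (abs_sub_le _ _ _) hp0.le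
    have hsum := Summable.of_nonneg_of_le (fun g => by positivity) hle m1
    refine ⟨hsum, ?_⟩
    calc (∑' g, |w (g * (s :: l).prod) - w g| ^ p) ^ (1 / p)
        ≤ (∑' g, (|w (g * s * l.prod) - w (g * s)| + |w (g * s) - w g|) ^ p) ^ (1 / p) :=
          Real.rpow_le_rpow (tsum_nonneg fun g => by positivity) (hsum.tsum_le_tsum hle m1)
            (by positivity)
      _ ≤ _ := m2
      _ ≤ l.length * F ^ (1 / p) + F ^ (1 / p) := by
          rw [e2]
          refine add_le_add ih2 (Real.rpow_le_rpow (tsum_nonneg fun g => by positivity) hs2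
            (by positivity))
      _ = _ := by push_cast [List.length_cons]; ring

/-- If `w` is supported in `A₀`, is at least `t` on `A₁`, and `B` is a set of words of length at
most `r` with at least twice as many elements as `A₀`, then at least half of the translates of each
point of `A₁` by `B` leave the support of `w`. -/
lemma card_mul_rpow_le_of_ball {S' : Finset G} {p F t : ℝ} (hp : 1 ≤ p) (hF : 0 ≤ F) (ht : 0 < t)
    {w : G → ℝ}
    (h : ∀ s ∈ S', (Summable fun g => |w (g * s) - w g| ^ p) ∧
      ∑' g, |w (g * s) - w g| ^ p ≤ F)
    {A₀ A₁ B : Finset G} {r : ℕ} (h0 : ∀ g ∉ A₀, w g = 0) (h1 : ∀ g ∈ A₁, t ≤ w g)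
    (hB : ∀ x ∈ B, ∃ l : List G, (∀ y ∈ l, y ∈ S') ∧ l.length ≤ r ∧ l.prod = x)
    (hB0 : B.Nonempty) (hcard : 2 * A₀.card ≤ B.card) :
    A₁.card * t ^ p ≤ 2 * ((r : ℝ) ^ p * F) := by
  classical
  have hp0 : 0 < p := by linarith
  have hx : ∀ x ∈ B, (Summable fun g => |w (g * x) - w g| ^ p) ∧
      ∑' g, |w (g * x) - w g| ^ p ≤ (r : ℝ) ^ p * F := by
    intro x hx
    obtain ⟨l, hl, hlr, rfl⟩ := hB x hx
    obtain ⟨a, b⟩ := summable_and_tsum_translate_le hp h l hl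
    refine ⟨a, ?_⟩
    have hT : 0 ≤ ∑' g, |w (g * l.prod) - w g| ^ p := tsum_nonneg fun g => by positivity
    have b' := Real.rpow_le_rpow (by positivity) b hp0.le
    rw [← Real.rpow_mul hT, Real.mul_rpow (by positivity) (by positivity), ← Real.rpow_mul hF,
      one_div, inv_mul_cancel₀ hp0.ne', Real.rpow_one, Real.rpow_one] at b'
    refine b'.trans ?_
    gcongr
  have upper : ∑ x ∈ B, ∑' g, |w (g * x) - w g| ^ p ≤ B.card * ((r : ℝ) ^ p * F) := by
    rw [← nsmul_eq_mul]
    exact Finset.sum_le_card_nsmul _ _ _ fun x hxB => (hx x hxB).2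
  have lower : A₁.card * ((B.card : ℝ) / 2 * t ^ p) ≤ ∑ x ∈ B, ∑' g, |w (g * x) - w g| ^ p := by
    calc A₁.card * ((B.card : ℝ) / 2 * t ^ p)
        ≤ ∑ g ∈ A₁, ∑ x ∈ B, |w (g * x) - w g| ^ p := by
          rw [← nsmul_eq_mul]
          refine Finset.card_nsmul_le_sum _ _ _ fun g hg => ?_
          have c1 : (B.filter fun x => g * x ∈ A₀).card ≤ A₀.card :=
            Finset.card_le_card_of_injOn (fun x => g * x)
              (fun x hx => by simpa using (Finset.mem_filter.1 hx).2)
              (fun x _ y _ hxy => mul_left_cancel hxy)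
          have c2 := Finset.card_filter_add_card_filter_not (s := B) fun x => g * x ∈ A₀
          have c3 : (B.card : ℝ) / 2 ≤ (B.filter fun x => g * x ∉ A₀).card := by
            rw [div_le_iff₀ (by norm_num)]
            norm_cast
            omega
          calc (B.card : ℝ) / 2 * t ^ p ≤ (B.filter fun x => g * x ∉ A₀).card * t ^ p := by gcongr
            _ ≤ ∑ x ∈ B.filter fun x => g * x ∉ A₀, |w (g * x) - w g| ^ p := by
                rw [← nsmul_eq_mul]
                refine Finset.card_nsmul_le_sum _ _ _ fun x hx => ?_
                rw [h0 _ (Finset.mem_filter.1 hx).2, zero_sub, abs_neg]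
                exact Real.rpow_le_rpow ht.le ((h1 g hg).trans (le_abs_self _)) hp0.le
            _ ≤ _ := Finset.sum_le_sum_of_subset_of_nonneg (Finset.filter_subset _ _)
                fun _ _ _ => by positivity
      _ = ∑ x ∈ B, ∑ g ∈ A₁, |w (g * x) - w g| ^ p := Finset.sum_comm
      _ ≤ _ := Finset.sum_le_sum fun x hxB =>
          (hx x hxB).1.sum_le_tsum _ fun g _ => by positivity
  have hBpos : (0 : ℝ) < B.card := by exact_mod_cast hB0.card_pos
  have := lower.trans upper
  refine le_of_mul_le_mul_left ?_ hBpos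
  nlinarith

lemma exists_list_length_eq_wordLength {S' : Finset G} (hsym : ∀ g ∈ S', g⁻¹ ∈ S')
    (hgen : Subgroup.closure (S' : Set G) = ⊤) (g : G) :
    ∃ l : List G, (∀ x ∈ l, x ∈ S') ∧ l.length = wordLength S' g ∧ l.prod = g := by
  have hne : {n : ℕ | ∃ l : List G, (∀ x ∈ l, x ∈ S') ∧ l.length = n ∧ l.prod = g}.Nonempty := by
    have hg : g ∈ (Subgroup.closure (S' : Set G)).toSubmonoid := by rw [hgen]; trivial
    rw [Subgroup.closure_toSubmonoid] at hg
    obtain ⟨l, hl, rfl⟩ := Submonoid.exists_list_of_mem_closure hg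
    refine ⟨_, l, fun x hx => ?_, rfl, rfl⟩
    rcases hl x hx with h | h
    · exact h
    · simpa using hsym _ h
  exact Nat.sInf_mem hne

/-- A Faber–Krahn type inequality for level sets, with constant depending on the volume growth
only. -/
lemma exists_card_mul_rpow_le {S' : Finset G} (hsym : ∀ g ∈ S', g⁻¹ ∈ S')
    (hgen : Subgroup.closure (S' : Set G) = ⊤) {C D p : ℝ} (hC : 0 < C) (hD : 0 < D)
    (hgrowth : ∀ r : ℕ, 1 ≤ r → C * (r : ℝ) ^ D ≤ (ballCard S' r : ℝ)) (hp : 1 ≤ p) :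
    ∃ M : ℝ, 0 ≤ M ∧ ∀ (w : G → ℝ) (F t : ℝ) (A₀ A₁ : Finset G), 0 ≤ F → 0 < t →
      (∀ s ∈ S', (Summable fun g => |w (g * s) - w g| ^ p) ∧
        ∑' g, |w (g * s) - w g| ^ p ≤ F) →
      (∀ g ∉ A₀, w g = 0) → (∀ g ∈ A₁, t ≤ w g) →
      A₁.card * t ^ p ≤ M * (A₀.card : ℝ) ^ (p / D) * F := by
  have hp0 : 0 < p := by linarith
  set m : ℝ := (2 / C) ^ (1 / D) + 1 with hm
  have hm0 : 0 < m := by positivity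
  refine ⟨2 * m ^ p, by positivity, fun w F t A₀ A₁ hF ht h h0 h1 => ?_⟩
  rcases A₀.eq_empty_or_nonempty with rfl | hA
  · have : A₁ = ∅ := by
      refine Finset.eq_empty_of_forall_notMem fun g hg => ?_
      have := h1 g hg
      rw [h0 g (by simp)] at this
      linarith
    subst this
    simp only [Finset.card_empty, Nat.cast_zero, zero_mul]
    positivity
  have ha : (1 : ℝ) ≤ A₀.card := by exact_mod_cast hA.card_pos
  set a : ℝ := (A₀.card : ℝ) with hadef
  have ha0 : 0 < a := by linarith
  -- `r` is chosen so that balls of radius `r` have at least `2 * a` elements.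
  set ρ : ℝ := (2 / C) ^ (1 / D) * a ^ (1 / D) with hρ
  have hρ0 : 0 < ρ := by positivity
  set r : ℕ := ⌈ρ⌉₊ with hr
  have hr1 : 1 ≤ r := Nat.one_le_ceil_iff.2 hρ0
  have hρr : ρ ≤ r := Nat.le_ceil ρ
  have hrle : (r : ℝ) ≤ m * a ^ (1 / D) := by
    have h1 : (r : ℝ) < ρ + 1 := Nat.ceil_lt_add_one hρ0.le
    have h2 : 1 ≤ a ^ (1 / D) := Real.one_le_rpow ha (by positivity)
    rw [hm, add_mul, one_mul]
    linarith
  have hvol : 2 * a ≤ ballCard S' r := by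
    refine le_trans ?_ (hgrowth r hr1)
    have h1 : ρ ^ D = 2 / C * a := by
      rw [hρ, Real.mul_rpow (by positivity) (by positivity), ← Real.rpow_mul (by positivity),
        ← Real.rpow_mul (by positivity), one_div, inv_mul_cancel₀ hD.ne', Real.rpow_one,
        Real.rpow_one]
    calc 2 * a = C * ρ ^ D := by rw [h1]; field_simp
      _ ≤ _ := by gcongr
  have hcard0 : Nat.card {g : G | wordLength S' g ≤ r} ≠ 0 := by
    intro h0
    rw [ballCard, h0] at hvol
    push_cast at hvol
    linarith
  have hfin : {g : G | wordLength S' g ≤ r}.Finite := Nat.finite_of_card_ne_zero hcard0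
  have hBc : (hfin.toFinset.card : ℝ) = ballCard S' r := by
    rw [ballCard, Nat.card_coe_set_eq, Set.ncard_eq_toFinset_card _ hfin]
  have key := card_mul_rpow_le_of_ball hp hF ht h h0 h1 (B := hfin.toFinset) (r := r)
    (fun x hx => by
      obtain ⟨l, hl, hlen, hprod⟩ := exists_list_length_eq_wordLength hsym hgen x
      exact ⟨l, hl, hlen ▸ (by simpa using hx), hprod⟩)
    (Finset.card_pos.1 (by
      have : (0 : ℝ) < hfin.toFinset.card := by rw [hBc]; linarith
      exact_mod_cast this))
    (by
      have : 2 * (A₀.card : ℝ) ≤ hfin.toFinset.card := by rw [hBc]; exact hvol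
      exact_mod_cast this)
  calc A₁.card * t ^ p ≤ 2 * ((r : ℝ) ^ p * F) := key
    _ ≤ 2 * ((m * a ^ (1 / D)) ^ p * F) := by gcongr
    _ = 2 * m ^ p * a ^ (p / D) * F := by
        rw [Real.mul_rpow hm0.le (by positivity), ← Real.rpow_mul ha0.le,
          show 1 / D * p = p / D by ring]
        ring

/-! ### Dyadic slices and the Sobolev inequality -/

/-- The slice of `t` between the dyadic heights `2 ^ k` and `2 ^ (k + 1)`, shifted to start
at `0`. -/
def dyadicSlice (k : ℤ) (t : ℝ) : ℝ := max (min t (2 ^ (k + 1))) (2 ^ k) - 2 ^ k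

lemma dyadicSlice_of_le {k : ℤ} {t : ℝ} (h : t ≤ 2 ^ k) : dyadicSlice k t = 0 := by
  rw [dyadicSlice, max_eq_right ((min_le_left _ _).trans h), sub_self]

lemma dyadicSlice_of_ge {k : ℤ} {t : ℝ} (h : 2 ^ (k + 1) ≤ t) : dyadicSlice k t = 2 ^ k := by
  have h2 : (2 : ℝ) ^ (k + 1) = 2 * 2 ^ k := by rw [zpow_add₀ (by norm_num)]; ring
  have h0 : (0 : ℝ) < 2 ^ k := by positivity
  rw [dyadicSlice, min_eq_right h, max_eq_left (by linarith), h2]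
  ring

lemma dyadicSlice_mono (k : ℤ) : Monotone (dyadicSlice k) := fun a b h => by
  unfold dyadicSlice
  gcongr

lemma sum_range_dyadicSlice (m : ℤ) (n : ℕ) (t : ℝ) :
    ∑ j ∈ Finset.range n, dyadicSlice (m + j) t = max (min t (2 ^ (m + n))) (2 ^ m) - 2 ^ m := by
  induction n with
  | zero => simp
  | succ n ih =>
    rw [Finset.sum_range_succ, ih, dyadicSlice]
    have h1 : (2 : ℝ) ^ m ≤ 2 ^ (m + n) := zpow_le_zpow_right₀ (by norm_num) (by omega)
    have h2 : (2 : ℝ) ^ (m + n) ≤ 2 ^ (m + n + 1) := zpow_le_zpow_right₀ (by norm_num) (by omega)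
    push_cast
    rw [← add_assoc]
    generalize (2 : ℝ) ^ (m + (n : ℤ) + 1) = d at *
    generalize (2 : ℝ) ^ (m + (n : ℤ)) = c at *
    generalize (2 : ℝ) ^ m = b at *
    rcases le_total t b with h | h
    · rw [min_eq_left (by linarith), min_eq_left (by linarith), max_eq_right h,
        max_eq_right (by linarith)]
      ring
    rcases le_total t c with h' | h'
    · rw [min_eq_left (by linarith), min_eq_left (by linarith), max_eq_left h,
        max_eq_right (by linarith)]
      ring
    · rw [min_eq_right h', max_eq_left h1, max_eq_left (le_min h' h2),
        max_eq_left (le_min h (by linarith))]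
      ring

lemma sum_dyadicSlice_sub_le (K : Finset ℤ) {a b : ℝ} (h : b ≤ a) :
    ∑ k ∈ K, (dyadicSlice k a - dyadicSlice k b) ≤ a - b := by
  obtain ⟨m, n, hK⟩ : ∃ (m : ℤ) (n : ℕ), K ⊆ (Finset.range n).image fun j : ℕ => m + (j : ℤ) := by
    obtain ⟨m, hm⟩ := K.bddBelow
    obtain ⟨M, hM⟩ := K.bddAbove
    refine ⟨m, (M - m + 1).toNat, fun k hk => ?_⟩
    have h1 := hm hk
    have h2 := hM hk
    exact Finset.mem_image.2 ⟨(k - m).toNat, by simp; omega, by simp; omega⟩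
  calc ∑ k ∈ K, (dyadicSlice k a - dyadicSlice k b)
      ≤ ∑ k ∈ (Finset.range n).image fun j : ℕ => m + (j : ℤ),
          (dyadicSlice k a - dyadicSlice k b) :=
        Finset.sum_le_sum_of_subset_of_nonneg hK fun k _ _ => sub_nonneg.2 (dyadicSlice_mono k h)
    _ = ∑ j ∈ Finset.range n, (dyadicSlice (m + j) a - dyadicSlice (m + j) b) :=
        Finset.sum_image fun i _ j _ hij => by simpa using hij
    _ = max (min a (2 ^ (m + n))) (2 ^ m) - max (min b (2 ^ (m + n))) (2 ^ m) := by
        rw [Finset.sum_sub_distrib, sum_range_dyadicSlice, sum_range_dyadicSlice]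
        ring
    _ ≤ a - b := by
        have e1 := abs_max_sub_max_le_abs (min a (2 ^ (m + n))) (min b (2 ^ (m + n))) ((2 : ℝ) ^ m)
        have e2 := abs_min_sub_min_le_max a (2 ^ (m + n)) b ((2 : ℝ) ^ (m + n))
        rw [sub_self, abs_zero, max_eq_left (abs_nonneg _)] at e2
        rw [abs_of_nonneg (sub_nonneg.2 h)] at e2
        exact (le_abs_self _).trans (e1.trans e2)

/-- The slices of a function have disjoint energies, so these add up to at most the energy of the
function. -/
lemma sum_abs_dyadicSlice_sub_rpow_le {p : ℝ} (hp : 1 ≤ p) (K : Finset ℤ) (a b : ℝ) :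
    ∑ k ∈ K, |dyadicSlice k a - dyadicSlice k b| ^ p ≤ |a - b| ^ p := by
  wlog h : b ≤ a generalizing a b
  · simpa only [abs_sub_comm] using this b a (le_of_not_ge h)
  have hsum := sum_dyadicSlice_sub_le K h
  have hnn : ∀ k, 0 ≤ dyadicSlice k a - dyadicSlice k b :=
    fun k => sub_nonneg.2 (dyadicSlice_mono k h)
  rcases h.eq_or_lt with rfl | h'
  · simp [Real.zero_rpow (show p ≠ 0 by linarith)]
  rw [abs_of_pos (sub_pos.2 h')]
  set X := a - b with hX
  have hX0 : 0 < X := sub_pos.2 h'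
  have split : ∀ x : ℝ, 0 ≤ x → x ^ p = x * x ^ (p - 1) := fun x hx => by
    nth_rewrite 2 [← Real.rpow_one x]
    rw [← Real.rpow_add_of_nonneg hx (by norm_num) (by linarith)]
    congr 1; ring
  calc ∑ k ∈ K, |dyadicSlice k a - dyadicSlice k b| ^ p
      ≤ ∑ k ∈ K, (dyadicSlice k a - dyadicSlice k b) * X ^ (p - 1) := by
        refine Finset.sum_le_sum fun k hk => ?_
        rw [abs_of_nonneg (hnn k), split _ (hnn k)]
        refine mul_le_mul_of_nonneg_left (Real.rpow_le_rpow (hnn k) ?_ (by linarith)) (hnn k)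
        exact (Finset.single_le_sum (fun k _ => hnn k) hk).trans hsum
    _ = (∑ k ∈ K, (dyadicSlice k a - dyadicSlice k b)) * X ^ (p - 1) := by
        rw [Finset.sum_mul]
    _ ≤ X * X ^ (p - 1) := by gcongr
    _ = X ^ p := (split X hX0.le).symm

/-- Chebyshev's inequality for power sums. -/
lemma finite_and_card_mul_le {ι : Type*} {P : ℝ} (hP : 0 < P) {v : ι → ℝ} (hv : ∀ i, 0 ≤ v i)
    (hs : Summable fun i => v i ^ P) {x : ℝ} (hx : 0 < x) :
    ∃ A : Finset ι, (∀ i, i ∈ A ↔ x < v i) ∧ A.card * x ^ P ≤ ∑' i, v i ^ P := by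
  have hfin : {i | x < v i}.Finite := by
    have h := hs.tendsto_cofinite_zero.eventually (gt_mem_nhds (show (0 : ℝ) < x ^ P by positivity))
    refine Set.Finite.subset (Filter.eventually_cofinite.1 h) fun i hi => ?_
    exact not_lt.2 (Real.rpow_le_rpow hx.le (le_of_lt hi) hP.le)
  refine ⟨hfin.toFinset, fun i => by simp, ?_⟩
  calc (hfin.toFinset.card : ℝ) * x ^ P ≤ ∑ i ∈ hfin.toFinset, v i ^ P := by
        rw [← nsmul_eq_mul]
        refine Finset.card_nsmul_le_sum _ _ _ fun i hi => ?_
        have : x < v i := by simpa using hi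
        exact Real.rpow_le_rpow hx.le this.le hP.le
    _ ≤ _ := hs.sum_le_tsum _ fun i _ => Real.rpow_nonneg (hv i) _

/-- The critical Sobolev inequality on a Cayley graph of volume growth at least `r ^ D`. Writing
`Aₖ` for the level set `{|u| > 2 ^ k}` and `Gₖ` for the energy of the `k`-th dyadic slice of `|u|`,
the Faber–Krahn inequality bounds `2 ^ (kp) |Aₖ₊₁|` by `M |Aₖ| ^ (p / D) Gₖ`, and Chebyshev's
inequality bounds `|Aₖ|`; summing over `k` bounds a power of `‖u‖_{p*}` by the total energy. -/
lemma exists_sobolev {S' : Finset G} (hsym : ∀ g ∈ S', g⁻¹ ∈ S')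
    (hgen : Subgroup.closure (S' : Set G) = ⊤) {C D p : ℝ} (hC : 0 < C)
    (hgrowth : ∀ r : ℕ, 1 ≤ r → C * (r : ℝ) ^ D ≤ (ballCard S' r : ℝ)) (hp : 1 ≤ p) (hpD : p < D) :
    ∃ M : ℝ, 0 ≤ M ∧ ∀ u : G → ℝ, cMemD S' p (D * p / (D - p)) u →
      ∑' g, |u g| ^ (D * p / (D - p)) ≤ (M * cDSumPow S' p u) ^ (D / (D - p)) := by
  classical
  have hp0 : 0 < p := by linarith
  have hD : 0 < D := by linarith
  have hDp : 0 < D - p := by linarith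
  obtain ⟨M, hM, hFK⟩ := exists_card_mul_rpow_le hsym hgen hC hD hgrowth hp
  set P : ℝ := D * p / (D - p) with hP
  have hP0 : 0 < P := by positivity
  have hPp : p + P * (p / D) = P := by rw [hP]; field_simp; ring
  refine ⟨4 ^ P * M, by positivity, fun u ⟨hu, hgrad⟩ => ?_⟩
  rw [summable_cGradPow_iff] at hgrad
  rw [cDSumPow_eq_sum hgrad]
  set v : G → ℝ := fun g => |u g| with hv
  have hv0 : ∀ g, 0 ≤ v g := fun g => abs_nonneg _
  set N : ℝ := ∑' g, |u g| ^ P with hN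
  have hN0 : 0 ≤ N := tsum_nonneg fun g => by positivity
  set E : ℝ := ∑ s ∈ S', ∑' g, |u (g * s) - u g| ^ p with hE
  have hE0 : 0 ≤ E := Finset.sum_nonneg fun s _ => tsum_nonneg fun g => by positivity
  choose A hA hAcard using fun k : ℤ => finite_and_card_mul_le hP0 hv0 hu
    (show (0 : ℝ) < 2 ^ k by positivity)
  set e : ℤ → G → G → ℝ := fun k s g => |dyadicSlice k (v (g * s)) - dyadicSlice k (v g)| ^ p
    with he
  have hele : ∀ (K : Finset ℤ) s g, ∑ k ∈ K, e k s g ≤ |u (g * s) - u g| ^ p := fun K s g =>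
    (sum_abs_dyadicSlice_sub_rpow_le hp K _ _).trans
      (Real.rpow_le_rpow (abs_nonneg _) (abs_abs_sub_abs_le _ _) hp0.le)
  have he0 : ∀ k s g, 0 ≤ e k s g := fun k s g => by positivity
  have hes : ∀ k, ∀ s ∈ S', Summable (e k s) := fun k s hs =>
    Summable.of_nonneg_of_le (he0 k s) (fun g => by simpa using hele {k} s g) (hgrad s hs)
  set Γ : ℤ → ℝ := fun k => ∑ s ∈ S', ∑' g, e k s g with hΓ
  have hΓ0 : ∀ k, 0 ≤ Γ k := fun k => Finset.sum_nonneg fun s _ => tsum_nonneg (he0 k s)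
  have hΓsum : ∀ K : Finset ℤ, ∑ k ∈ K, Γ k ≤ E := fun K => by
    rw [hΓ, Finset.sum_comm]
    refine Finset.sum_le_sum fun s hs => ?_
    rw [← Summable.tsum_finsetSum fun k _ => hes k s hs]
    exact (summable_sum fun k _ => hes k s hs).tsum_le_tsum (hele K s) (hgrad s hs)
  have hlevel : ∀ k : ℤ, (A (k + 1)).card * ((2 : ℝ) ^ (k + 2)) ^ P ≤
      4 ^ P * M * N ^ (p / D) * Γ k := fun k => by
    have hx : (0 : ℝ) < 2 ^ k := by positivity
    have h1 := hFK (fun g => dyadicSlice k (v g)) (Γ k) (2 ^ k) (A k) (A (k + 1)) (hΓ0 k) hx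
      (fun s hs => ⟨hes k s hs, Finset.single_le_sum (f := fun s => ∑' g, e k s g)
        (fun s _ => tsum_nonneg (he0 k s)) hs⟩)
      (fun g hg => dyadicSlice_of_le (by simpa [hA] using hg))
      (fun g hg => (dyadicSlice_of_ge ((hA _ _).1 hg).le).ge)
    have h2 := hAcard k
    rw [zpow_add₀ (by norm_num)]
    generalize (2 : ℝ) ^ k = x at *
    have h3 : (x * (2 : ℝ) ^ (2 : ℤ)) ^ P = 4 ^ P * (x ^ p * (x ^ P) ^ (p / D)) := by
      rw [← Real.rpow_mul hx.le, ← Real.rpow_add hx, hPp, mul_comm,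
        Real.mul_rpow (by norm_num) hx.le]
      norm_num
    calc (A (k + 1)).card * (x * (2 : ℝ) ^ (2 : ℤ)) ^ P
        = 4 ^ P * (x ^ P) ^ (p / D) * ((A (k + 1)).card * x ^ p) := by rw [h3]; ring
      _ ≤ 4 ^ P * (x ^ P) ^ (p / D) * (M * ((A k).card : ℝ) ^ (p / D) * Γ k) := by gcongr
      _ = 4 ^ P * M * ((A k).card * x ^ P) ^ (p / D) * Γ k := by
          rw [Real.mul_rpow (by positivity) (by positivity)]; ring
      _ ≤ 4 ^ P * M * N ^ (p / D) * Γ k := by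
          have := hΓ0 k
          gcongr
  have hmain : N ≤ 4 ^ P * M * N ^ (p / D) * E := by
    refine hu.tsum_le_of_sum_le fun s => ?_
    have hκ : ∀ g, ∃ k : ℤ, 0 < v g → (2 : ℝ) ^ (k + 1) < v g ∧ v g ≤ 2 ^ (k + 2) := fun g => by
      by_cases h : 0 < v g
      · obtain ⟨n, hn⟩ := exists_mem_Ioc_zpow h (one_lt_two)
        refine ⟨n - 1, fun _ => ⟨?_, ?_⟩⟩
        · rw [sub_add_cancel]; exact hn.1
        · rw [show n - 1 + 2 = n + 1 by ring]; exact hn.2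
      · exact ⟨0, fun h' => absurd h' h⟩
    choose κ hκ using hκ
    set s' := s.filter fun g => 0 < v g with hs'
    have hss' : ∑ g ∈ s', v g ^ P = ∑ g ∈ s, v g ^ P := by
      refine Finset.sum_filter_of_ne fun g _ hg => (hv0 g).lt_of_ne fun h0 => hg ?_
      rw [← h0, Real.zero_rpow hP0.ne']
    calc ∑ g ∈ s, v g ^ P = ∑ k ∈ s'.image κ, ∑ g ∈ s' with κ g = k, v g ^ P := by
          rw [Finset.sum_fiberwise_of_maps_to fun g hg => Finset.mem_image_of_mem κ hg, hss']
      _ ≤ ∑ k ∈ s'.image κ, 4 ^ P * M * N ^ (p / D) * Γ k := by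
          refine Finset.sum_le_sum fun k _ => le_trans ?_ (hlevel k)
          have hmem : ∀ g ∈ s'.filter (fun g => κ g = k),
              (2 : ℝ) ^ (k + 1) < v g ∧ v g ≤ 2 ^ (k + 2) := fun g hg => by
            simp only [hs', Finset.mem_filter] at hg
            simpa [hg.2] using hκ g hg.1.2
          calc ∑ g ∈ s' with κ g = k, v g ^ P
              ≤ (s'.filter fun g => κ g = k).card * ((2 : ℝ) ^ (k + 2)) ^ P := by
                rw [← nsmul_eq_mul]
                exact Finset.sum_le_card_nsmul _ _ _ fun g hg =>
                  Real.rpow_le_rpow (hv0 g) (hmem g hg).2 hP0.le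
            _ ≤ _ := by
                gcongr
                exact fun g hg => (hA _ _).2 (hmem g hg).1
      _ = 4 ^ P * M * N ^ (p / D) * ∑ k ∈ s'.image κ, Γ k := by rw [Finset.mul_sum]
      _ ≤ _ := by
          have := hΓsum (s'.image κ)
          gcongr
  rcases hN0.eq_or_lt with h0 | hNpos
  · rw [← h0]; positivity
  -- Divide by `N ^ (p / D)`, where finiteness of `N` enters.
  have hθ : N ^ ((D - p) / D) * N ^ (p / D) = N := by
    rw [← Real.rpow_add hNpos, ← add_div, sub_add_cancel, div_self hD.ne', Real.rpow_one]
  have hdiv : N ^ ((D - p) / D) ≤ 4 ^ P * M * E := by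
    refine le_of_mul_le_mul_right ?_ (Real.rpow_pos_of_pos hNpos (p / D))
    rw [hθ]
    linarith
  calc N = (N ^ ((D - p) / D)) ^ (D / (D - p)) := by
        rw [← Real.rpow_mul hN0, show (D - p) / D * (D / (D - p)) = 1 by field_simp, Real.rpow_one]
    _ ≤ _ := Real.rpow_le_rpow (by positivity) hdiv (by positivity)

/-! ### Extremal functions -/

/-- The inclusion `ℓ^P ⊆ ℓ^q` for `P ≤ q`, in interpolated form. -/
lemma summable_and_tsum_rpow_le {ι : Type*} {P q c : ℝ} (hP : 0 < P) (hPq : P ≤ q) {u : ι → ℝ}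
    (hu : Summable fun i => |u i| ^ P) (hc : ∀ i, |u i| ≤ c) :
    (Summable fun i => |u i| ^ q) ∧ ∑' i, |u i| ^ q ≤ c ^ (q - P) * ∑' i, |u i| ^ P := by
  have hle : ∀ i, |u i| ^ q ≤ c ^ (q - P) * |u i| ^ P := fun i => by
    calc |u i| ^ q = |u i| ^ (q - P) * |u i| ^ P := by
          rw [← Real.rpow_add_of_nonneg (abs_nonneg _) (by linarith) hP.le, sub_add_cancel]
      _ ≤ _ := by
          refine mul_le_mul_of_nonneg_right ?_ (by positivity)
          exact Real.rpow_le_rpow (abs_nonneg _) (hc i) (by linarith)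
  have hs := Summable.of_nonneg_of_le (fun i => by positivity) hle (hu.mul_left _)
  exact ⟨hs, by rw [← tsum_mul_left]; exact hs.tsum_le_tsum hle (hu.mul_left _)⟩

lemma abs_le_tsum_rpow {ι : Type*} {P : ℝ} (hP : 0 < P) {u : ι → ℝ}
    (hu : Summable fun i => |u i| ^ P) (i : ι) : |u i| ≤ (∑' i, |u i| ^ P) ^ (1 / P) := by
  have h := hu.le_tsum i fun j _ => by positivity
  calc |u i| = (|u i| ^ P) ^ (1 / P) := by
        rw [← Real.rpow_mul (abs_nonneg _), mul_one_div_cancel hP.ne', Real.rpow_one]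
    _ ≤ _ := Real.rpow_le_rpow (by positivity) h (by positivity)

lemma cMemlp.mono {ι : Type*} {P q : ℝ} (hP : 0 < P) (hPq : P ≤ q) {u : ι → ℝ} (hu : cMemlp P u) :
    cMemlp q u :=
  (summable_and_tsum_rpow_le hP hPq hu (abs_le_tsum_rpow hP hu)).1

lemma clpNorm_eq_one_iff {ι : Type*} {q : ℝ} (hq : 0 < q) {u : ι → ℝ} :
    clpNorm q u = 1 ↔ ∑' g, |u g| ^ q = 1 := by
  have h0 : 0 ≤ ∑' g, |u g| ^ q := tsum_nonneg fun g => by positivity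
  rw [clpNorm, ← Real.rpow_left_inj (Real.rpow_nonneg h0 _) zero_le_one hq.ne', ← Real.rpow_mul h0,
    one_div_mul_cancel hq.ne', Real.rpow_one, Real.one_rpow]

lemma cMemD_iff {S' : Finset G} {p P : ℝ} {u : G → ℝ} :
    cMemD S' p P u ↔ (Summable fun g => |u g| ^ P) ∧
      ∀ s ∈ S', Summable fun g => |u (g * s) - u g| ^ p := by
  rw [cMemD, summable_cGradPow_iff, cMemlp]

lemma cDSumPow_nonneg (S' : Finset G) (p : ℝ) (u : G → ℝ) : 0 ≤ cDSumPow S' p u :=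
  tsum_nonneg fun g => by rw [cGradPow_eq_sum]; positivity

lemma cMemD.sub {S' : Finset G} {p P : ℝ} (hp : 1 ≤ p) (hP : 1 ≤ P) {u v : G → ℝ}
    (hu : cMemD S' p P u) (hv : cMemD S' p P v) : cMemD S' p P fun g => u g - v g := by
  rw [cMemD_iff] at *
  refine ⟨summable_abs_sub_rpow hP hu.1 hv.1, fun s hs => ?_⟩
  simpa only [sub_sub_sub_comm] using summable_abs_sub_rpow hp (hu.2 s hs) (hv.2 s hs)

lemma cGradPow_translate (S' : Finset G) (p : ℝ) (u : G → ℝ) (a g : G) :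
    cGradPow S' p (fun g => u (a * g)) g = cGradPow S' p u (a * g) := by
  simp only [cGradPow_eq_sum, mul_assoc]

lemma cMemD.translate {S' : Finset G} {p P : ℝ} {u : G → ℝ} (hu : cMemD S' p P u) (a : G) :
    cMemD S' p P fun g => u (a * g) := by
  refine ⟨(Equiv.mulLeft a).summable_iff.2 hu.1, ?_⟩
  simp only [cGradPow_translate]
  exact (Equiv.mulLeft a).summable_iff.2 hu.2

lemma cDSumPow_translate (S' : Finset G) (p : ℝ) (u : G → ℝ) (a : G) :
    cDSumPow S' p (fun g => u (a * g)) = cDSumPow S' p u := by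
  simp only [cDSumPow, cGradPow_translate]
  exact (Equiv.mulLeft a).tsum_eq fun g => cGradPow S' p u g

lemma tsum_rpow_translate (q : ℝ) (u : G → ℝ) (a : G) :
    ∑' g, |u (a * g)| ^ q = ∑' g, |u g| ^ q :=
  (Equiv.mulLeft a).tsum_eq fun g => |u g| ^ q

lemma abs_mul_sub_mul_rpow (p c a b : ℝ) : |c * a - c * b| ^ p = |c| ^ p * |a - b| ^ p := by
  rw [← mul_sub, abs_mul, Real.mul_rpow (abs_nonneg _) (abs_nonneg _)]

/-- The Sobolev inequality with optimal constant, in homogeneous form. -/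
lemma sInf_mul_rpow_le {S' : Finset G} {p P q : ℝ} (hp : 0 < p) (hq : 0 < q)
    {w : G → ℝ} (hw : cMemD S' p P w) :
    sInf {t : ℝ | ∃ u : G → ℝ, cMemD S' p P u ∧ clpNorm q u = 1 ∧ t = cDSumPow S' p u} *
      (∑' g, |w g| ^ q) ^ (p / q) ≤ cDSumPow S' p w := by
  set T := {t : ℝ | ∃ u : G → ℝ, cMemD S' p P u ∧ clpNorm q u = 1 ∧ t = cDSumPow S' p u}
  have hb : BddBelow T := ⟨0, by rintro t ⟨u, -, -, rfl⟩; exact cDSumPow_nonneg _ _ _⟩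
  have hN : 0 ≤ ∑' g, |w g| ^ q := tsum_nonneg fun g => by positivity
  rcases hN.eq_or_lt with h0 | hpos
  · rw [← h0, Real.zero_rpow (by positivity), mul_zero]
    exact cDSumPow_nonneg _ _ _
  set N := ∑' g, |w g| ^ q with hNdef
  set c : ℝ := (N ^ (1 / q))⁻¹ with hc
  have hc0 : 0 < c := by positivity
  have hcpow : ∀ x : ℝ, |c| ^ x = (N ^ (x / q))⁻¹ := fun x => by
    rw [abs_of_pos hc0, hc, Real.inv_rpow (by positivity), ← Real.rpow_mul hN,
      one_div_mul_eq_div]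
  rw [cMemD_iff] at hw
  have hgrad : ∀ s ∈ S', Summable fun g => |c * w (g * s) - c * w g| ^ p := fun s hs => by
    simp only [abs_mul_sub_mul_rpow]
    exact (hw.2 s hs).mul_left _
  have hmem : cMemD S' p P fun g => c * w g := by
    rw [cMemD_iff]
    refine ⟨?_, hgrad⟩
    simp only [abs_mul, Real.mul_rpow (abs_nonneg _) (abs_nonneg _)]
    exact hw.1.mul_left _
  have hnorm : clpNorm q (fun g => c * w g) = 1 := by
    rw [clpNorm_eq_one_iff hq]
    simp only [abs_mul, Real.mul_rpow (abs_nonneg _) (abs_nonneg _)]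
    rw [tsum_mul_left, hcpow, div_self hq.ne', Real.rpow_one, inv_mul_cancel₀ hpos.ne']
  have hle : sInf T ≤ cDSumPow S' p fun g => c * w g := csInf_le hb ⟨_, hmem, hnorm, rfl⟩
  rw [cDSumPow_eq_sum (u := fun g => c * w g) hgrad] at hle
  simp only [abs_mul_sub_mul_rpow, tsum_mul_left] at hle
  rw [← Finset.mul_sum, ← cDSumPow_eq_sum hw.2, hcpow] at hle
  rwa [inv_mul_eq_div, le_div_iff₀ (by positivity)] at hle

/-- The Brezis–Lieb lemma and Fatou's lemma for the Dirichlet energy. -/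
lemma brezis_lieb_cDSumPow {S' : Finset G} {p M : ℝ} (hp : 1 ≤ p) {f : ℕ → G → ℝ} {v : G → ℝ}
    (hf : ∀ n, ∀ s ∈ S', Summable fun g => |f n (g * s) - f n g| ^ p)
    (hM : ∀ n, cDSumPow S' p (f n) ≤ M)
    (hlim : ∀ g, Tendsto (fun n => f n g) atTop (𝓝 (v g))) :
    (∀ s ∈ S', Summable fun g => |v (g * s) - v g| ^ p) ∧
      Tendsto (fun n => cDSumPow S' p (f n) - cDSumPow S' p (fun g => f n g - v g)) atTop
        (𝓝 (cDSumPow S' p v)) := by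
  have hMs : ∀ s ∈ S', ∀ n, ∑' g, |f n (g * s) - f n g| ^ p ≤ M := fun s hs n => by
    refine le_trans ?_ (hM n)
    rw [cDSumPow_eq_sum (hf n)]
    exact Finset.single_le_sum (f := fun s => ∑' g, |f n (g * s) - f n g| ^ p)
      (fun s _ => tsum_nonneg fun g => by positivity) hs
  have hlims : ∀ s g, Tendsto (fun n => f n (g * s) - f n g) atTop (𝓝 (v (g * s) - v g)) :=
    fun s g => (hlim (g * s)).sub (hlim g)
  have hv : ∀ s ∈ S', Summable fun g => |v (g * s) - v g| ^ p := fun s hs =>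
    (summable_and_tsum_le_of_tendsto hp (fun n => hf n s hs) (hMs s hs) (hlims s)).1
  have hfv : ∀ n, ∀ s ∈ S', Summable fun g => |(f n (g * s) - v (g * s)) - (f n g - v g)| ^ p :=
    fun n s hs => by
      simpa only [sub_sub_sub_comm] using summable_abs_sub_rpow hp (hf n s hs) (hv s hs)
  refine ⟨hv, ?_⟩
  have := tendsto_finsetSum S' fun s hs =>
    brezis_lieb hp (fun n => hf n s hs) (hMs s hs) (hlims s)
  rw [cDSumPow_eq_sum hv]
  refine this.congr fun n => ?_
  rw [cDSumPow_eq_sum (hf n), cDSumPow_eq_sum (u := fun g => f n g - v g) (hfv n), ← Finset.sum_sub_distrib]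
  simp only [sub_sub_sub_comm]

/-- For `0 < a < 1` the reverse inequality is strict, since `x < x ^ θ` on `(0, 1)`. -/
lemma eq_one_of_rpow_add_rpow_le {a θ : ℝ} (ha : 0 < a) (ha1 : a ≤ 1) (hθ : θ < 1)
    (h : (1 - a) ^ θ + a ^ θ ≤ 1) : a = 1 := by
  by_contra hne
  have h1 : a < 1 := lt_of_le_of_ne ha1 hne
  have e1 := Real.rpow_lt_rpow_of_exponent_gt ha h1 hθ
  have e2 := Real.rpow_lt_rpow_of_exponent_gt (sub_pos.2 h1) (by linarith : 1 - a < 1) hθ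
  rw [Real.rpow_one] at e1 e2
  linarith

/-- Diagonal extraction on a finitely generated (hence countable) group. -/
lemma exists_subseq_tendsto {S' : Finset G} (hgen : Subgroup.closure (S' : Set G) = ⊤)
    {f : ℕ → G → ℝ} (hf : ∀ n g, |f n g| ≤ 1) :
    ∃ (v : G → ℝ) (φ : ℕ → ℕ), StrictMono φ ∧
      ∀ g, Tendsto (fun k => f (φ k) g) atTop (𝓝 (v g)) := by
  have : Countable G := by
    have hsurj : Function.Surjective (FreeGroup.lift fun s : S' => (s : G)) := by
      rw [← MonoidHom.range_eq_top, FreeGroup.range_lift_eq_closure]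
      simpa using hgen
    exact hsurj.countable
  have hK : IsCompact (Set.pi Set.univ fun _ : G => Set.Icc (-1 : ℝ) 1) :=
    isCompact_univ_pi fun _ => isCompact_Icc
  obtain ⟨v, -, φ, hφ, hv⟩ := hK.isSeqCompact (x := f)
    fun n g _ => abs_le.1 (hf n g)
  exact ⟨v, φ, hφ, fun g => (tendsto_pi_nhds.1 hv) g⟩

/-- Vanishing is excluded: as `q` is supercritical, a function bounded in the critical space with
unit `ℓ^q` norm is bounded below somewhere. -/
lemma exists_lt_abs {ι : Type*} {P q N c : ℝ} (hP : 0 < P) (hPq : P ≤ q) {u : ι → ℝ}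
    (hu : Summable fun g => |u g| ^ P) (hN : ∑' g, |u g| ^ P ≤ N) (hc : 0 ≤ c)
    (hcN : c ^ (q - P) * N < 1) (h1 : ∑' g, |u g| ^ q = 1) : ∃ g, c < |u g| := by
  by_contra! hle
  have h2 := (summable_and_tsum_rpow_le hP hPq hu hle).2
  rw [h1] at h2
  have h3 : c ^ (q - P) * ∑' g, |u g| ^ P ≤ c ^ (q - P) * N := by gcongr
  linarith

end Sobolev

/-- existence of extremal functions for the supercritical Sobolev
inequality on a Cayley graph with polynomial volume growth of degree `D ≥ 3`. -/
theorem stmt15 (G : Type*) [Group G] (S' : Finset G)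
    (hsym : ∀ g ∈ S', g⁻¹ ∈ S') (hid : (1 : G) ∉ S')
    (hgen : Subgroup.closure (S' : Set G) = ⊤)
    (C : ℝ) (hC : 0 < C) (D : ℝ) (hD : 3 ≤ D)
    (hgrowth : ∀ r : ℕ, 1 ≤ r → C * (r : ℝ) ^ D ≤ (ballCard S' r : ℝ))
    (p q : ℝ) (hp1 : 1 ≤ p) (hpD : p < D) (hq : D * p / (D - p) < q)
    (S : ℝ)
    (hS : S = sInf {t : ℝ | ∃ u : G → ℝ,
        cMemD S' p (D * p / (D - p)) u ∧ clpNorm q u = 1 ∧ t = cDSumPow S' p u})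
    (u : ℕ → G → ℝ)
    (hmem : ∀ n, cMemD S' p (D * p / (D - p)) (u n))
    (hnorm : ∀ n, clpNorm q (u n) = 1)
    (hmin : Tendsto (fun n => cDSumPow S' p (u n)) atTop (𝓝 S)) :
    ∃ (gseq : ℕ → G) (φ : ℕ → ℕ), StrictMono φ ∧
      ∃ v : G → ℝ, cMemD S' p (D * p / (D - p)) v ∧
        clpNorm q v = 1 ∧ cDSumPow S' p v = S ∧
        Tendsto (fun k => cDnorm S' p (fun g => u (φ k) (gseq (φ k) * g) - v g))
          atTop (𝓝 0) := by
  have hp0 : 0 < p := by linarith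
  have hDp : 0 < D - p := by linarith
  obtain ⟨M, hM, hsob⟩ := exists_sobolev hsym hgen hC hgrowth hp1 hpD
  set P : ℝ := D * p / (D - p) with hP
  have hpP : p < P := by
    rw [hP, lt_div_iff₀ hDp]
    nlinarith
  have hP0 : 0 < P := by linarith
  have hq0 : 0 < q := by linarith
  have hu1 : ∀ n, ∑' g, |u n g| ^ q = 1 := fun n => (clpNorm_eq_one_iff hq0).1 (hnorm n)
  -- The infimum is positive.
  have hSpos : 0 < S := by
    have hge : ∀ n, 1 ≤ M * cDSumPow S' p (u n) := fun n => by
      by_contra! hlt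
      have h0 : 0 ≤ M * cDSumPow S' p (u n) := mul_nonneg hM (cDSumPow_nonneg _ _ _)
      have hN0 : 0 ≤ ∑' g, |u n g| ^ P := tsum_nonneg fun g => by positivity
      have hN : ∑' g, |u n g| ^ P < 1 :=
        (hsob _ (hmem n)).trans_lt (Real.rpow_lt_one h0 hlt (div_pos (by linarith) hDp))
      obtain ⟨g, hg⟩ := exists_lt_abs (c := 1) hP0 hq.le (hmem n).1 le_rfl zero_le_one
        (by rwa [Real.one_rpow, one_mul]) (hu1 n)
      have := (abs_le_tsum_rpow hP0 (hmem n).1 g).trans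
        (Real.rpow_le_one hN0 hN.le (by positivity))
      linarith
    have hlim : 1 ≤ M * S := ge_of_tendsto' (hmin.const_mul M) hge
    by_contra! hS0
    nlinarith
  have hSle : ∀ {w : G → ℝ}, cMemD S' p P w →
      S * (∑' g, |w g| ^ q) ^ (p / q) ≤ cDSumPow S' p w := fun hw => by
    rw [hS]
    exact sInf_mul_rpow_le hp0 hq0 hw
  obtain ⟨L, hL⟩ := hmin.bddAbove_range
  have hL : ∀ n, cDSumPow S' p (u n) ≤ L := fun n => hL ⟨n, rfl⟩
  have hL0 : 0 ≤ L := (cDSumPow_nonneg _ _ _).trans (hL 0)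
  set N : ℝ := (M * L) ^ (D / (D - p)) with hNdef
  have hN0 : 0 ≤ N := by positivity
  have hN : ∀ n, ∑' g, |u n g| ^ P ≤ N := fun n => by
    refine (hsob _ (hmem n)).trans (Real.rpow_le_rpow
      (mul_nonneg hM (cDSumPow_nonneg _ _ _)) ?_ (div_nonneg (by linarith) hDp.le))
    exact mul_le_mul_of_nonneg_left (hL n) hM
  set c : ℝ := (N + 1)⁻¹ ^ (1 / (q - P)) with hc
  have hc0 : 0 < c := by positivity
  have hcN : c ^ (q - P) * N < 1 := by
    have : q - P ≠ 0 := by linarith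
    rw [hc, ← Real.rpow_mul (by positivity), one_div_mul_cancel this, Real.rpow_one,
      inv_mul_eq_div, div_lt_one (by positivity)]
    linarith
  choose gseq hgseq using fun n =>
    exists_lt_abs hP0 hq.le (hmem n).1 (hN n) hc0.le hcN (hu1 n)
  set f : ℕ → G → ℝ := fun n g => u n (gseq n * g) with hf
  have hfmem : ∀ n, cMemD S' p P (f n) := fun n => (hmem n).translate _
  have hf1 : ∀ n, ∑' g, |f n g| ^ q = 1 := fun n => by rw [hf, tsum_rpow_translate, hu1]
  have hfD : ∀ n, cDSumPow S' p (f n) = cDSumPow S' p (u n) := fun n => cDSumPow_translate _ _ _ _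
  have hfq : ∀ n, Summable fun g => |f n g| ^ q := fun n =>
    cMemlp.mono hP0 hq.le (hfmem n).1
  have hfle : ∀ n g, |f n g| ≤ 1 := fun n g => by
    have := abs_le_tsum_rpow hq0 (hfq n) g
    rwa [hf1, Real.one_rpow] at this
  obtain ⟨v, φ, hφ, hv⟩ := exists_subseq_tendsto hgen hfle
  obtain ⟨hvgrad, hBLD⟩ := brezis_lieb_cDSumPow hp1 (M := L)
    (fun k => (cMemD_iff.1 (hfmem (φ k))).2) (fun k => (hfD (φ k)).trans_le (hL _)) hv
  have hvP := (summable_and_tsum_le_of_tendsto (p := P) (M := N) (by linarith)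
    (fun k => (hfmem (φ k)).1)
    (fun k => (tsum_rpow_translate P (u (φ k)) _).trans_le (hN _)) hv).1
  have hvmem : cMemD S' p P v := cMemD_iff.2 ⟨hvP, hvgrad⟩
  obtain ⟨hvq, ha1⟩ := summable_and_tsum_le_of_tendsto (p := q) (by linarith)
    (fun k => hfq (φ k)) (fun k => (hf1 (φ k)).le) hv
  have hBLq := brezis_lieb (p := q) (by linarith)
    (fun k => hfq (φ k)) (fun k => (hf1 (φ k)).le) hv
  set a : ℝ := ∑' g, |v g| ^ q with ha
  have ha0 : 0 < a := by
    have hv1 : c ≤ |v 1| := by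
      refine ge_of_tendsto' (hv 1).abs fun k => ?_
      simpa [hf] using (hgseq (φ k)).le
    exact hvq.tsum_pos (fun g => by positivity) 1
      (Real.rpow_pos_of_pos (hc0.trans_le hv1) _)
  simp only [hf1] at hBLq
  have hmass : Tendsto (fun k => ∑' g, |f (φ k) g - v g| ^ q) atTop (𝓝 (1 - a)) := by
    simpa using hBLq.const_sub 1
  have henergy : Tendsto (fun k => cDSumPow S' p fun g => f (φ k) g - v g) atTop
      (𝓝 (S - cDSumPow S' p v)) := by
    have h1 : Tendsto (fun k => cDSumPow S' p (f (φ k))) atTop (𝓝 S) := by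
      simp only [hfD]
      exact hmin.comp hφ.tendsto_atTop
    simpa using h1.sub hBLD
  have hpq : 0 < p / q := by positivity
  -- Dichotomy is excluded: both the limit and the remainder obey the Sobolev inequality.
  have hrem : S * (1 - a) ^ (p / q) ≤ S - cDSumPow S' p v :=
    le_of_tendsto_of_tendsto' ((hmass.rpow_const (Or.inr hpq.le)).const_mul S) henergy
      fun k => hSle ((hfmem (φ k)).sub hp1 (by linarith) hvmem)
  have hvS := hSle hvmem
  have ha_eq : a = 1 := by
    refine eq_one_of_rpow_add_rpow_le ha0 ha1 ((div_lt_one hq0).2 (by linarith : p < q)) ?_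
    refine le_of_mul_le_mul_left ?_ hSpos
    linarith
  rw [← ha, ha_eq, Real.one_rpow, mul_one] at hvS
  rw [ha_eq, sub_self, Real.zero_rpow hpq.ne', mul_zero] at hrem
  have hvD : cDSumPow S' p v = S := by linarith
  refine ⟨gseq, φ, hφ, v, hvmem, (clpNorm_eq_one_iff hq0).2 ha_eq, hvD, ?_⟩
  rw [hvD, sub_self] at henergy
  have h := henergy.rpow_const (p := 1 / p) (Or.inr (by positivity))
  rwa [Real.zero_rpow (by positivity)] at h
end
end

section
/- Let N ≥ 1, r, s > 1, 0 < λ < N, with 1/r + 1/s + λ/N ≥ 2. Then there exists a constant C = C_{r,s,λ} > 0 such that Σ_{i,j∈ℤ^N, i≠j} f(i) g(j) / |i−j|^λ ≤ C ‖f‖_r ‖g‖_s for all non-negative f ∈ ℓ^r(ℤ^N) and g ∈ ℓ^s(ℤ^N); in particular the discrete Hardy–Littlewood–Sobolev inequality holds in both the critical case 1/r + 1/s + λ/N = 2 and the supercritical case 1/r + 1/s + λ/N > 2. -/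
/-!
The critical and supercritical cases are treated at once. Put `α = 1/r`, `β = 1/s` and
`γ = 2 - α - β`, so that `0 < γ ≤ λ/N < 1`. Distinct lattice points have distance at least `1`, so
`|i-j|^{-λ} ≤ |i-j|^{-Nγ}`, and only the critical kernel matters. After normalisation
`f = ‖f‖_r F^α` and `g = ‖g‖_s G^β` with `F`, `G` of mass at most one, and with `H(x)` a dyadic
version of `|x|^{-N}`, the claim is that `Σ F(i)^α G(j)^β H(i-j)^γ` is bounded, where
`α + β + γ = 2`.

Compare the three quantities `F(i)`, `G(j)`, `H(i-j)` (`pointwise_split`). If `H` is smallest, then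
`H^γ = H^{1-α} H^{1-β} ≤ F^{1-α} G^{1-β}`, and the summand is at most `F(i) G(j)`, whose total sum
is at most `1`. If `G(j)` is smallest, the summand is at most `F(i)^α min(F(i), H)^β H^γ`. For fixed
`i` the sum over `j` is `O(F(i)^{α + (β+γ-1)}) = O(F(i))` by
`Σ_x min(a, H(x))^β H(x)^γ = O(a^{β+γ-1})` (`exists_kernel_bound`). This last sum, taken over dyadic
shells, is a two-sided geometric series centred at `H ≈ a` (`exists_geom_bound`); it converges
because `γ < 1 < β + γ`. The case of `F(i)` smallest is symmetric.
-/


open Filter Topology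

noncomputable section

/-- The vertex set of the `N`-dimensional integer lattice graph. -/
abbrev ZN (N : ℕ) := Fin N → ℤ

/-- Adjacency in the lattice graph `ℤ^N`: `x ∼ y` iff `Σ_k |x k - y k| = 1`. -/
def adj {N : ℕ} (x y : ZN N) : Prop := (∑ k, |x k - y k|) = 1

/-- `|∇u(x)|_p^p = Σ_{y∼x} |u(y)-u(x)|^p`. -/
def gradPow {N : ℕ} (p : ℝ) (u : ZN N → ℝ) (x : ZN N) : ℝ :=
  ∑' y : {y : ZN N // adj x y}, |u y.1 - u x| ^ p

/-- `‖u‖_{D^{1,p}}^p = Σ_x |∇u(x)|_p^p`. -/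
def DSumPow {N : ℕ} (p : ℝ) (u : ZN N → ℝ) : ℝ := ∑' x, gradPow p u x

/-- `‖u‖_{D^{1,p}}`. -/
def Dnorm {N : ℕ} (p : ℝ) (u : ZN N → ℝ) : ℝ := DSumPow p u ^ (1 / p)

/-- `‖u‖_q = (Σ_x |u(x)|^q)^{1/q}`. -/
def lpNorm {N : ℕ} (q : ℝ) (u : ZN N → ℝ) : ℝ := (∑' x, |u x| ^ q) ^ (1 / q)

/-- `u ∈ ℓ^q(ℤ^N)`. -/
def Memlp {N : ℕ} (q : ℝ) (u : ZN N → ℝ) : Prop := Summable fun x => |u x| ^ q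

/-- `u ∈ D^{1,p}(ℤ^N)`, identified with `{u ∈ ℓ^{p*} : ‖u‖_{D^{1,p}} < ∞}`. -/
def MemD {N : ℕ} (p pstar : ℝ) (u : ZN N → ℝ) : Prop :=
  Memlp pstar u ∧ Summable fun x => gradPow p u x

/-- Euclidean distance between lattice points, viewed in `ℝ^N`. -/
def eudist {N : ℕ} (i j : ZN N) : ℝ := Real.sqrt (∑ k, ((i k : ℝ) - (j k : ℝ)) ^ 2)

/-- `(|i|^{-λ} ∗ f)(i) = Σ_{j ≠ i} f(j)/|i-j|^λ`. -/
def hlsConv {N : ℕ} (lam : ℝ) (f : ZN N → ℝ) (i : ZN N) : ℝ :=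
  ∑' j : ZN N, if j = i then 0 else f j / eudist i j ^ lam

/-- The bilinear HLS sum `Σ_{i ≠ j} f(i) g(j) / |i-j|^λ`. -/
def hlsSum {N : ℕ} (lam : ℝ) (f g : ZN N → ℝ) : ℝ :=
  ∑' q : ZN N × ZN N, if q.1 = q.2 then 0 else f q.1 * g q.2 / eudist q.1 q.2 ^ lam

/-! ### Dyadic shells of the lattice -/

/-- The dyadic scale `⌊log₂ |x|_∞⌋` of a lattice point; the origin gets the junk scale `0`. -/
def scale {N : ℕ} (x : ZN N) : ℕ := Nat.log 2 (Finset.univ.sup fun k => (x k).natAbs)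

/-- The dyadic model `2^{-N·scale x}` of `|x|^{-N}`. -/
def dyad {N : ℕ} (x : ZN N) : ℝ := ((1 / 2 : ℝ) ^ N) ^ scale x

lemma dyad_pos {N : ℕ} (x : ZN N) : 0 < dyad x := by unfold dyad; positivity

lemma scale_neg {N : ℕ} (x : ZN N) : scale (-x) = scale x := by simp [scale]

lemma two_pow_scale_le {N : ℕ} {i j : ZN N} (h : i ≠ j) :
    (2 : ℝ) ^ scale (i - j) ≤ eudist i j := by
  set D : ℕ := Finset.univ.sup fun k => ((i - j) k).natAbs with hD
  have hne : ∃ k, i k ≠ j k := Function.ne_iff.mp h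
  obtain ⟨k0, hk0⟩ := hne
  have hD0 : D ≠ 0 := by
    have h1 : ((i - j) k0).natAbs ≤ D :=
      Finset.le_sup (f := fun k => ((i - j) k).natAbs) (Finset.mem_univ k0)
    have h2 : ((i - j) k0).natAbs ≠ 0 := by
      simpa [sub_eq_zero] using hk0
    omega
  obtain ⟨k, -, hk⟩ := Finset.exists_mem_eq_sup Finset.univ ⟨k0, Finset.mem_univ _⟩
    (fun k => ((i - j) k).natAbs)
  have h1 : (2 : ℝ) ^ scale (i - j) ≤ (D : ℝ) := by
    exact_mod_cast Nat.pow_log_le_self 2 hD0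
  refine h1.trans ?_
  unfold eudist
  apply Real.le_sqrt_of_sq_le
  have h2 : (D : ℝ) ^ 2 = ((i k : ℝ) - (j k : ℝ)) ^ 2 := by
    rw [hD, hk, Nat.cast_natAbs, Int.cast_abs, sq_abs]
    simp
  rw [h2]
  exact Finset.single_le_sum (f := fun k => ((i k : ℝ) - (j k : ℝ)) ^ 2)
    (fun _ _ => sq_nonneg _) (Finset.mem_univ k)

lemma one_div_eudist_le {N : ℕ} (hN : 1 ≤ N) {γ lam : ℝ} (h0 : 0 < lam)
    (h : γ ≤ lam / N) {i j : ZN N} (hij : i ≠ j) :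
    1 / eudist i j ^ lam ≤ dyad (i - j) ^ γ := by
  have hN' : (0 : ℝ) < N := by exact_mod_cast hN
  have hb := two_pow_scale_le hij
  set n := scale (i - j) with hn
  have h1 : (1 : ℝ) ≤ 2 ^ n := one_le_pow₀ (by norm_num)
  have h2 : ((2 : ℝ) ^ n) ^ ((N : ℝ) * γ) ≤ eudist i j ^ lam :=
    (Real.rpow_le_rpow_of_exponent_le h1 (by rw [le_div_iff₀ hN'] at h; linarith)).trans
      (Real.rpow_le_rpow (by positivity) hb h0.le)
  have h3 : dyad (i - j) ^ γ = 1 / ((2 : ℝ) ^ n) ^ ((N : ℝ) * γ) := by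
    unfold dyad
    rw [← hn, Real.rpow_mul (by positivity), Real.rpow_natCast, one_div, one_div,
      ← Real.inv_rpow (by positivity)]
    congr 1
    rw [inv_pow, inv_pow, ← pow_mul, ← pow_mul, mul_comm]
  rw [h3]
  exact one_div_le_one_div_of_le (by positivity) h2

/-- A dyadic shell in `ℤ^N` at scale `n` has `O(2^{nN})` points: it lies in a cube with
`2^{n+2} + 1` lattice points on each side. -/
lemma encard_shell_le {N : ℕ} (n : ℕ) :
    ({x : ZN N | scale x = n}.encard : ENNReal) ≤ ENNReal.ofReal (8 ^ N * ((2 : ℝ) ^ N) ^ n) := by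
  set S : Finset (ZN N) := Fintype.piFinset fun _ => Finset.Icc (-(2 : ℤ) ^ (n + 1)) (2 ^ (n + 1))
  have hsub : {x : ZN N | scale x = n} ⊆ (S : Set (ZN N)) := by
    intro x hx
    change scale x = n at hx
    have h1 : (Finset.univ.sup fun k => (x k).natAbs) < 2 ^ (n + 1) := by
      rw [← hx]; exact Nat.lt_pow_succ_log_self (by norm_num) _
    simp only [S, Finset.mem_coe, Fintype.mem_piFinset, Finset.mem_Icc]
    intro k
    have h2 : (x k).natAbs < 2 ^ (n + 1) :=
      (Finset.le_sup (f := fun k => (x k).natAbs) (Finset.mem_univ k)).trans_lt h1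
    have h3 : |x k| < 2 ^ (n + 1) := by
      rw [Int.abs_eq_natAbs]; exact_mod_cast h2
    rw [← abs_le]; exact h3.le
  have hcard : S.card ≤ 8 ^ N * (2 ^ N) ^ n := by
    simp only [S, Fintype.card_piFinset, Int.card_Icc, Finset.prod_const, Finset.card_univ,
      Fintype.card_fin]
    rw [← pow_mul, mul_comm N n, pow_mul, ← mul_pow]
    gcongr
    zify
    have : (1 : ℤ) ≤ 2 ^ n := one_le_pow₀ (by norm_num)
    rw [Int.toNat_of_nonneg (by rw [pow_succ]; linarith)]
    rw [pow_succ]; linarith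
  have h4 : ({x : ZN N | scale x = n}.encard : ENNReal) ≤ ((S.card : ℕ) : ENNReal) := by
    have := Set.encard_le_encard hsub
    rw [Set.encard_coe_eq_coe_finsetCard] at this
    exact_mod_cast this
  refine h4.trans ?_
  rw [← ENNReal.ofReal_natCast]
  apply ENNReal.ofReal_le_ofReal
  exact_mod_cast hcard

/-- Summation over dyadic shells. -/
lemma tsum_scale_le {N : ℕ} (u : ℕ → ENNReal) :
    ∑' x : ZN N, u (scale x) ≤ ∑' n, ENNReal.ofReal (8 ^ N * ((2 : ℝ) ^ N) ^ n) * u n := by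
  rw [← (Equiv.sigmaFiberEquiv (scale (N := N))).tsum_eq, ENNReal.tsum_sigma']
  refine ENNReal.tsum_le_tsum fun n => ?_
  have : ∀ x : {x : ZN N // scale x = n},
      u (scale (Equiv.sigmaFiberEquiv (scale (N := N)) ⟨n, x⟩)) = u n := by
    intro x
    simp [x.2]
  simp_rw [this]
  have h := ENNReal.tsum_set_const {x : ZN N | scale x = n} (u n)
  refine le_trans (le_of_eq h) ?_
  gcongr
  exact encard_shell_le n

/-! ### The truncated kernel estimate -/

lemma rpow_le_pow_of_le {t p δ e : ℝ} {m : ℕ} (ht : 0 < t) (hp : 0 < p) (hp1 : p < 1)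
    (htm : t ≤ p ^ m) (hδ : 0 < δ) (he : δ ≤ e) : t ^ e ≤ (p ^ δ) ^ m := by
  calc t ^ e ≤ (p ^ m) ^ e := Real.rpow_le_rpow ht.le htm (hδ.le.trans he)
    _ ≤ (p ^ m) ^ δ := Real.rpow_le_rpow_of_exponent_ge (by positivity)
        (pow_le_one₀ hp.le hp1.le) he
    _ = (p ^ δ) ^ m := by
        rw [← Real.rpow_natCast, ← Real.rpow_natCast, ← Real.rpow_mul hp.le,
          ← Real.rpow_mul hp.le, mul_comm]

/-- One-dimensional geometric estimate: `min(a, y)^β y^{γ-1}` along `y = p^k` peaks at `y ≈ a`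
with value `a^{β+γ-1}` and decays geometrically on both sides. -/
lemma exists_geom_bound {p β γ : ℝ} (hp : 0 < p) (hp1 : p < 1) (hγ1 : γ < 1)
    (hβγ : 1 < β + γ) :
    ∃ C : ℝ, 0 < C ∧ ∀ a : ℝ, 0 < a → a ≤ 1 →
      ∑' k : ℕ, ENNReal.ofReal (min a (p ^ k) ^ β * (p ^ k) ^ (γ - 1)) ≤
        ENNReal.ofReal (C * a ^ (β + γ - 1)) := by
  set δ := min (β + γ - 1) (1 - γ) with hδd
  have hδ : 0 < δ := lt_min (by linarith) (by linarith)
  set ρ := p ^ δ with hρd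
  have hρ : 0 < ρ := Real.rpow_pos_of_pos hp _
  have hρ1 : ρ < 1 := Real.rpow_lt_one hp.le hp1 hδ
  have hsum : Summable fun m : ℤ => ρ ^ m.natAbs := by
    refine Summable.of_nat_of_neg ?_ ?_ <;>
      simpa using summable_geometric_of_lt_one hρ.le hρ1
  have hS : 0 < ∑' m : ℤ, ρ ^ m.natAbs := hsum.tsum_pos (fun _ => by positivity) 0 (by simp)
  refine ⟨ρ⁻¹ * ∑' m : ℤ, ρ ^ m.natAbs, by positivity, fun a ha ha1 => ?_⟩
  obtain ⟨K, hK1, hK2⟩ := exists_nat_pow_near_of_lt_one ha ha1 hp hp1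
  have key : ∀ k : ℕ, min a (p ^ k) ^ β * (p ^ k) ^ (γ - 1) ≤
      a ^ (β + γ - 1) * ρ⁻¹ * ρ ^ ((k : ℤ) - K).natAbs := by
    intro k
    have hy : 0 < p ^ k := by positivity
    have haa : 0 < a ^ (β + γ - 1) := Real.rpow_pos_of_pos ha _
    rcases le_or_gt k K with hk | hk
    · have hay : a ≤ p ^ k := hK2.trans (pow_le_pow_of_le_one hp.le hp1.le hk)
      have e1 : min a (p ^ k) ^ β * (p ^ k) ^ (γ - 1) =
          a ^ (β + γ - 1) * (a / p ^ k) ^ (1 - γ) := by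
        rw [min_eq_left hay, Real.div_rpow ha.le hy.le, ← mul_div_assoc, ← Real.rpow_add ha,
          div_eq_mul_inv, ← Real.rpow_neg hy.le]
        ring_nf
      have e2 : (a / p ^ k) ^ (1 - γ) ≤ ρ ^ (K - k) := by
        refine rpow_le_pow_of_le (by positivity) hp hp1 ?_ hδ (min_le_right _ _)
        rw [div_le_iff₀ hy, ← pow_add, Nat.sub_add_cancel hk]
        exact hK2
      have e3 : ((k : ℤ) - K).natAbs = K - k := by omega
      rw [e1, e3, mul_assoc]
      gcongr
      refine e2.trans (le_mul_of_one_le_left (by positivity) ?_)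
      exact (one_le_inv₀ hρ).mpr hρ1.le
    · have hya : p ^ k ≤ a := (pow_le_pow_of_le_one hp.le hp1.le hk).trans hK1.le
      have e1 : min a (p ^ k) ^ β * (p ^ k) ^ (γ - 1) =
          a ^ (β + γ - 1) * (p ^ k / a) ^ (β + γ - 1) := by
        rw [min_eq_right hya, Real.div_rpow hy.le ha.le, mul_div_cancel₀ _ haa.ne',
          ← Real.rpow_add hy]
        ring_nf
      have e2 : (p ^ k / a) ^ (β + γ - 1) ≤ ρ ^ (k - (K + 1)) := by
        refine rpow_le_pow_of_le (by positivity) hp hp1 ?_ hδ (min_le_left _ _)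
        rw [div_le_iff₀ ha]
        calc p ^ k = p ^ (k - (K + 1)) * p ^ (K + 1) := by
              rw [← pow_add, Nat.sub_add_cancel hk]
          _ ≤ _ := by gcongr
      have e3 : ((k : ℤ) - K).natAbs = (k - (K + 1)) + 1 := by omega
      rw [e1, e3, mul_assoc, pow_succ', inv_mul_cancel_left₀ hρ.ne']
      gcongr
  have hinj : Function.Injective fun k : ℕ => (k : ℤ) - K := fun x y h => by
    simpa using h
  calc ∑' k : ℕ, ENNReal.ofReal (min a (p ^ k) ^ β * (p ^ k) ^ (γ - 1))
      ≤ ∑' k : ℕ, ENNReal.ofReal (a ^ (β + γ - 1) * ρ⁻¹ * ρ ^ ((k : ℤ) - K).natAbs) :=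
        ENNReal.tsum_le_tsum fun k => ENNReal.ofReal_le_ofReal (key k)
    _ ≤ ∑' m : ℤ, ENNReal.ofReal (a ^ (β + γ - 1) * ρ⁻¹ * ρ ^ m.natAbs) :=
        ENNReal.tsum_comp_le_tsum_of_injective hinj
          fun m : ℤ => ENNReal.ofReal (a ^ (β + γ - 1) * ρ⁻¹ * ρ ^ m.natAbs)
    _ = ENNReal.ofReal (∑' m : ℤ, a ^ (β + γ - 1) * ρ⁻¹ * ρ ^ m.natAbs) :=
        (ENNReal.ofReal_tsum_of_nonneg (fun m => by positivity) (hsum.mul_left _)).symm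
    _ = _ := by rw [tsum_mul_left]; ring_nf

/-- The truncated kernel estimate `Σ_x min(a, |x|^{-N})^β |x|^{-Nγ} ≲ a^{β+γ-1}`: the shell at
scale `n` contributes its cardinality `≈ 2^{nN}`, which turns the exponent `γ` into `γ - 1`. -/
lemma exists_kernel_bound {N : ℕ} (hN : 1 ≤ N) {β γ : ℝ} (hγ1 : γ < 1) (hβγ : 1 < β + γ) :
    ∃ C : ℝ, 0 < C ∧ ∀ a : ℝ, 0 < a → a ≤ 1 →
      ∑' x : ZN N, ENNReal.ofReal (min a (dyad x) ^ β * dyad x ^ γ) ≤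
        ENNReal.ofReal (C * a ^ (β + γ - 1)) := by
  have hp : (0 : ℝ) < (1 / 2) ^ N := by positivity
  have hp1 : (1 / 2 : ℝ) ^ N < 1 := pow_lt_one₀ (by norm_num) (by norm_num) (by omega)
  obtain ⟨C, hC, h⟩ := exists_geom_bound hp hp1 hγ1 hβγ
  refine ⟨8 ^ N * C, by positivity, fun a ha ha1 => ?_⟩
  set p : ℝ := (1 / 2) ^ N with hpd
  refine (tsum_scale_le (N := N)
    fun n => ENNReal.ofReal (min a (p ^ n) ^ β * (p ^ n) ^ γ)).trans ?_
  have e : ∀ n : ℕ, ENNReal.ofReal (8 ^ N * ((2 : ℝ) ^ N) ^ n) *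
      ENNReal.ofReal (min a (p ^ n) ^ β * (p ^ n) ^ γ) =
      ENNReal.ofReal (8 ^ N) * ENNReal.ofReal (min a (p ^ n) ^ β * (p ^ n) ^ (γ - 1)) := by
    intro n
    rw [← ENNReal.ofReal_mul (by positivity), ← ENNReal.ofReal_mul (by positivity)]
    congr 1
    have : ((2 : ℝ) ^ N) ^ n = (p ^ n)⁻¹ := by
      rw [hpd, one_div, inv_pow, inv_pow, inv_inv]
    rw [this, Real.rpow_sub_one (by positivity)]
    ring
  simp_rw [e]
  rw [ENNReal.tsum_mul_left, mul_assoc, ENNReal.ofReal_mul (by positivity)]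
  gcongr
  exact h a ha ha1

/-! ### The normalised inequality -/

/-- Splitting by the smallest of the three quantities `a`, `b`, `h`; the exponents sum to `2`, so
in each case the power of the smallest one can be traded against the other two. -/
lemma pointwise_split {α β γ a b h : ℝ} (hα : α < 1) (hβ : β < 1)
    (hα0 : 0 < α) (hβ0 : 0 < β) (hsum : α + β + γ = 2) (ha : 0 < a) (hb : 0 < b) (hh : 0 < h) :
    a ^ α * b ^ β * h ^ γ ≤
      a * b + a ^ α * (min a h ^ β * h ^ γ) + b ^ β * (min b h ^ α * h ^ γ) := by
  have n1 : 0 ≤ a ^ α * (min a h ^ β * h ^ γ) := by positivity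
  have n2 : 0 ≤ b ^ β * (min b h ^ α * h ^ γ) := by positivity
  have n0 : 0 ≤ a * b := by positivity
  by_cases h1 : h ≤ a ∧ h ≤ b
  · have e : h ^ γ ≤ a ^ (1 - α) * b ^ (1 - β) := by
      have : γ = (1 - α) + (1 - β) := by linarith
      rw [this, Real.rpow_add hh]
      have := h1.1
      have := h1.2
      gcongr
    have e2 : a ^ α * b ^ β * (a ^ (1 - α) * b ^ (1 - β)) = a * b := by
      rw [mul_mul_mul_comm, ← Real.rpow_add ha, ← Real.rpow_add hb]
      simp
    have : a ^ α * b ^ β * h ^ γ ≤ a * b := by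
      rw [← e2]; gcongr
    linarith
  · rcases le_total a b with hab | hab
    · have hah : a ≤ h := by
        by_contra hc
        exact h1 ⟨by linarith, by linarith⟩
      have : a ^ α * b ^ β * h ^ γ ≤ b ^ β * (min b h ^ α * h ^ γ) := by
        rw [mul_comm (a ^ α), mul_assoc]
        gcongr
        exact le_min hab hah
      linarith
    · have hbh : b ≤ h := by
        by_contra hc
        exact h1 ⟨by linarith, by linarith⟩
      have : a ^ α * b ^ β * h ^ γ ≤ a ^ α * (min a h ^ β * h ^ γ) := by
        rw [mul_assoc]
        gcongr
        exact le_min hab hbh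
      linarith

/-- Summing the kernel estimate against `F^α`: the powers combine to `F^α F^{β+γ-1} = F`. -/
lemma exists_weighted_bound {N : ℕ} (hN : 1 ≤ N) {α β γ : ℝ} (hα0 : 0 < α) (hα : α < 1)
    (hγ1 : γ < 1) (hsum : α + β + γ = 2) :
    ∃ C : ℝ, 0 < C ∧ ∀ F : ZN N → ℝ, (∀ i, 0 ≤ F i) → ∑' i, ENNReal.ofReal (F i) ≤ 1 →
      ∑' i, ∑' j, ENNReal.ofReal (F i ^ α * (min (F i) (dyad (i - j)) ^ β * dyad (i - j) ^ γ)) ≤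
        ENNReal.ofReal C := by
  obtain ⟨C, hC, h⟩ := exists_kernel_bound hN hγ1 (by linarith : 1 < β + γ)
  refine ⟨C, hC, fun F hF hF1 => ?_⟩
  have key : ∀ i, ∑' j, ENNReal.ofReal
      (F i ^ α * (min (F i) (dyad (i - j)) ^ β * dyad (i - j) ^ γ)) ≤
      ENNReal.ofReal C * ENNReal.ofReal (F i) := by
    intro i
    rcases (hF i).eq_or_lt with h0 | h0
    · simp [← h0, Real.zero_rpow hα0.ne']
    have hle : F i ≤ 1 := by
      have := (ENNReal.le_tsum (f := fun i => ENNReal.ofReal (F i)) i).trans hF1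
      simpa using this
    simp_rw [ENNReal.ofReal_mul (Real.rpow_nonneg (hF i) α)]
    rw [ENNReal.tsum_mul_left]
    have e := (Equiv.subLeft i).tsum_eq
      fun x : ZN N => ENNReal.ofReal (min (F i) (dyad x) ^ β * dyad x ^ γ)
    simp only [Equiv.subLeft_apply] at e
    rw [e]
    refine (mul_le_mul_right (h (F i) h0 hle) _).trans (le_of_eq ?_)
    rw [← ENNReal.ofReal_mul (by positivity), ← ENNReal.ofReal_mul hC.le]
    congr 1
    rw [mul_left_comm, ← Real.rpow_add h0]
    have : α + (β + γ - 1) = 1 := by linarith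
    rw [this, Real.rpow_one]
  refine (ENNReal.tsum_le_tsum key).trans ?_
  rw [ENNReal.tsum_mul_left]
  exact mul_le_of_le_one_right' hF1

/-- The critical inequality for densities `F`, `G` of mass at most one, with the dyadic kernel. -/
lemma exists_core_bound {N : ℕ} (hN : 1 ≤ N) {α β γ : ℝ} (hα0 : 0 < α) (hα : α < 1)
    (hβ0 : 0 < β) (hβ : β < 1) (hγ1 : γ < 1) (hsum : α + β + γ = 2) :
    ∃ C : ℝ, 0 < C ∧ ∀ F G : ZN N → ℝ, (∀ i, 0 ≤ F i) → (∀ i, 0 ≤ G i) →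
      ∑' i, ENNReal.ofReal (F i) ≤ 1 → ∑' i, ENNReal.ofReal (G i) ≤ 1 →
      ∑' q : ZN N × ZN N, ENNReal.ofReal (F q.1 ^ α * G q.2 ^ β * dyad (q.1 - q.2) ^ γ) ≤
        ENNReal.ofReal C := by
  obtain ⟨C1, hC1, h1⟩ := exists_weighted_bound hN hα0 hα hγ1 hsum
  obtain ⟨C2, hC2, h2⟩ := exists_weighted_bound (N := N) hN hβ0 hβ hγ1
    (by linarith : β + α + γ = 2)
  refine ⟨1 + C1 + C2, by positivity, fun F G hF hG hF1 hG1 => ?_⟩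
  set T1 : ZN N → ZN N → ENNReal := fun i j =>
    ENNReal.ofReal (F i ^ α * (min (F i) (dyad (i - j)) ^ β * dyad (i - j) ^ γ)) with hT1
  set T2 : ZN N → ZN N → ENNReal := fun j i =>
    ENNReal.ofReal (G j ^ β * (min (G j) (dyad (j - i)) ^ α * dyad (j - i) ^ γ)) with hT2
  have key : ∀ i j, ENNReal.ofReal (F i ^ α * G j ^ β * dyad (i - j) ^ γ) ≤
      ENNReal.ofReal (F i) * ENNReal.ofReal (G j) + T1 i j + T2 j i := by
    intro i j
    rcases (hF i).eq_or_lt with h0 | h0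
    · simp [← h0, Real.zero_rpow hα0.ne']
    rcases (hG j).eq_or_lt with h0' | h0'
    · simp [← h0', Real.zero_rpow hβ0.ne']
    have hd : 0 < dyad (i - j) := dyad_pos _
    have hsymm : dyad (j - i) = dyad (i - j) := by
      rw [← neg_sub, dyad, scale_neg]; rfl
    simp only [hT1, hT2]
    rw [hsymm, ← ENNReal.ofReal_mul h0.le, ← ENNReal.ofReal_add (by positivity) (by positivity),
      ← ENNReal.ofReal_add (by positivity) (by positivity)]
    exact ENNReal.ofReal_le_ofReal (pointwise_split hα hβ hα0 hβ0 hsum h0 h0' hd)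
  rw [ENNReal.tsum_prod']
  calc ∑' i, ∑' j, ENNReal.ofReal (F i ^ α * G j ^ β * dyad (i - j) ^ γ)
      ≤ ∑' i, ∑' j, (ENNReal.ofReal (F i) * ENNReal.ofReal (G j) + T1 i j + T2 j i) :=
        ENNReal.tsum_le_tsum fun i => ENNReal.tsum_le_tsum fun j => key i j
    _ = (∑' i, ENNReal.ofReal (F i)) * (∑' j, ENNReal.ofReal (G j)) + ∑' i, ∑' j, T1 i j +
          ∑' j, ∑' i, T2 j i := by
        simp_rw [ENNReal.tsum_add, ENNReal.tsum_mul_left, ENNReal.tsum_mul_right]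
        rw [ENNReal.tsum_comm (f := fun i j => T2 j i)]
    _ ≤ 1 + ENNReal.ofReal C1 + ENNReal.ofReal C2 := by
        gcongr
        · exact mul_le_one' hF1 hG1
        · exact h1 F hF hF1
        · exact h2 G hG hG1
    _ = _ := by
        rw [ENNReal.ofReal_add (by positivity) (by positivity),
          ENNReal.ofReal_add (by positivity) (by positivity), ENNReal.ofReal_one]

/-! ### Normalisation and conclusion -/

/-- A nonnegative `f ∈ ℓ^r` factors as `f = ‖f‖_r F^{1/r}` with `F ≥ 0` of mass at most one. For
`‖f‖_r = 0` the choice `F = 0` works. -/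
lemma exists_normalized {N : ℕ} {r : ℝ} (hr : 1 < r) {f : ZN N → ℝ} (hf : ∀ i, 0 ≤ f i)
    (hm : Memlp r f) :
    ∃ F : ZN N → ℝ, (∀ i, 0 ≤ F i) ∧ ∑' i, ENNReal.ofReal (F i) ≤ 1 ∧
      ∀ i, f i = lpNorm r f * F i ^ (1 / r) := by
  have hr0 : r ≠ 0 := by linarith
  set A := ∑' x, |f x| ^ r with hA
  have hA0 : 0 ≤ A := tsum_nonneg fun x => by positivity
  have hfA : ∀ i, f i = (|f i| ^ r) ^ (1 / r) := fun i => by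
    rw [abs_of_nonneg (hf i), ← Real.rpow_mul (hf i), mul_one_div_cancel hr0, Real.rpow_one]
  -- for `A = 0` the quotient below is the zero function
  refine ⟨fun i => |f i| ^ r / A, fun i => by positivity, ?_, fun i => ?_⟩
  · rw [← ENNReal.ofReal_tsum_of_nonneg (fun i => by positivity) (hm.div_const A), tsum_div_const,
      ← hA]
    exact ENNReal.ofReal_le_one.mpr (div_self_le_one A)
  · unfold lpNorm
    rw [← hA, Real.div_rpow (by positivity) hA0, ← hfA i]
    rcases hA0.eq_or_lt with h0 | h0
    · have hle : |f i| ^ r ≤ A := hm.le_tsum i fun j _ => by positivity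
      have : |f i| ^ r = 0 := le_antisymm (by rw [← h0] at hle; exact hle) (by positivity)
      rw [hfA i, this, Real.zero_rpow (by positivity)]
      simp
    · field_simp

/-- the discrete Hardy–Littlewood–Sobolev inequality on `ℤ^N` in the
critical and supercritical cases `1/r + 1/s + λ/N ≥ 2`. -/
theorem stmt16 (N : ℕ) (hN : 1 ≤ N) (r s lam : ℝ) (hr : 1 < r) (hs : 1 < s)
    (hlam0 : 0 < lam) (hlamN : lam < (N : ℝ))
    (hcrit : 1 / r + 1 / s + lam / (N : ℝ) ≥ 2) :
    ∃ C : ℝ, 0 < C ∧ ∀ f g : ZN N → ℝ, (∀ i, 0 ≤ f i) → (∀ j, 0 ≤ g j) →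
      Memlp r f → Memlp s g →
      hlsSum lam f g ≤ C * lpNorm r f * lpNorm s g := by
  have hN' : (0 : ℝ) < N := by exact_mod_cast hN
  have hr1 : 1 / r < 1 := by rw [div_lt_one (by linarith)]; exact hr
  have hs1 : 1 / s < 1 := by rw [div_lt_one (by linarith)]; exact hs
  have hl1 : lam / N < 1 := by rw [div_lt_one hN']; exact hlamN
  -- lowering the exponent of the kernel to the critical one only enlarges the sum
  set γ := 2 - 1 / r - 1 / s with hγ
  have hγl : γ ≤ lam / N := by linarith
  obtain ⟨C, hC, h⟩ := exists_core_bound (N := N) hN (α := 1 / r) (β := 1 / s) (γ := γ)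
    (by positivity) hr1 (by positivity) hs1 (by linarith) (by rw [hγ]; ring)
  refine ⟨C, hC, fun f g hf hg hmf hmg => ?_⟩
  obtain ⟨F, hF, hF1, hfF⟩ := exists_normalized hr hf hmf
  obtain ⟨G, hG, hG1, hgG⟩ := exists_normalized hs hg hmg
  have hA : 0 ≤ lpNorm r f := Real.rpow_nonneg (tsum_nonneg fun x => by positivity) _
  have hB : 0 ≤ lpNorm s g := Real.rpow_nonneg (tsum_nonneg fun x => by positivity) _
  set A := lpNorm r f
  set B := lpNorm s g
  set Φ : ZN N × ZN N → ℝ := fun q =>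
    if q.1 = q.2 then 0 else f q.1 * g q.2 / eudist q.1 q.2 ^ lam with hΦ
  have hΦ0 : ∀ q, 0 ≤ Φ q := fun q => by
    simp only [hΦ]
    split_ifs
    · exact le_rfl
    · exact div_nonneg (mul_nonneg (hf _) (hg _)) (Real.rpow_nonneg (Real.sqrt_nonneg _) _)
  have key : ∀ q, Φ q ≤
      A * B * (F q.1 ^ (1 / r) * G q.2 ^ (1 / s) * dyad (q.1 - q.2) ^ γ) := by
    intro q
    have hd : 0 ≤ dyad (q.1 - q.2) := (dyad_pos _).le
    have := hF q.1
    have := hG q.2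
    simp only [hΦ]
    split_ifs with hq
    · positivity
    · calc f q.1 * g q.2 / eudist q.1 q.2 ^ lam
          = f q.1 * g q.2 * (1 / eudist q.1 q.2 ^ lam) := by ring
        _ ≤ f q.1 * g q.2 * dyad (q.1 - q.2) ^ γ :=
            mul_le_mul_of_nonneg_left (one_div_eudist_le hN hlam0 hγl hq)
              (mul_nonneg (hf _) (hg _))
        _ = _ := by rw [hfF q.1, hgG q.2]; ring
  have hE : ∑' q, ENNReal.ofReal (Φ q) ≤ ENNReal.ofReal (C * A * B) := by
    calc ∑' q, ENNReal.ofReal (Φ q)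
        ≤ ∑' q : ZN N × ZN N, ENNReal.ofReal (A * B) * ENNReal.ofReal
            (F q.1 ^ (1 / r) * G q.2 ^ (1 / s) * dyad (q.1 - q.2) ^ γ) :=
          ENNReal.tsum_le_tsum fun q => by
            rw [← ENNReal.ofReal_mul (by positivity)]
            exact ENNReal.ofReal_le_ofReal (key q)
      _ ≤ ENNReal.ofReal (A * B) * ENNReal.ofReal C := by
          rw [ENNReal.tsum_mul_left]
          gcongr
          exact h F G hF hG hF1 hG1
      _ = _ := by
          rw [← ENNReal.ofReal_mul (by positivity)]
          ring_nf
  refine Real.tsum_le_of_sum_le (f := Φ) hΦ0 fun u => ?_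
  rw [← ENNReal.ofReal_le_ofReal_iff (by positivity),
    ENNReal.ofReal_sum_of_nonneg fun q _ => hΦ0 q]
  exact (ENNReal.sum_le_tsum u).trans hE
end
end

section
/- Let r, r*, t > 1, 0 < λ < N, with 1/r* + λ/N = 1 + 1/t and r < r*. Then there exists a constant C = C_{r,t} > 0 such that ‖|i|^{−λ} ∗ f‖_t ≤ C ‖f‖_r for all f ∈ ℓ^r(ℤ^N). -/
/-!
The hypotheses force `r < rstar < t`, so the exponent `q` given by Young's relation
`1/q + 1/r = 1 + 1/t` satisfies `q > 1`, and `r < rstar` turns the scaling identity into the strict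
inequality `1/q < lam/N`. Hence the off-diagonal kernel `x ↦ |x|^(-lam)` lies in `ℓ^q(ℤ^N)`
(`tsum_hlsKernel_rpow_ne_top`): its `q`-th power is `|x|^(-lam * q)` with `lam * q > N`, which is
summable over a lattice of rank `N`. Young's convolution inequality (`young_tsum`), which follows
from Hölder's inequality with three factors, then gives the bound with constant `‖k‖_q + 1`.
-/

open Filter Topology

noncomputable section

open scoped ENNReal

/-- Young's convolution inequality on a discrete abelian group, raised to the power `t`. The proof
writes `k g = (k^q g^r)^(1/t) (k^q)^(1 - 1/r) (g^r)^(1 - 1/q)` and applies Hölder's inequality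
with three factors. -/
theorem young_tsum {G : Type*} [AddCommGroup G] (k g : G → ℝ≥0∞) {q r t : ℝ}
    (hq : 1 < q) (hr : 1 < r) (ht : 1 < t) (h : 1 / q + 1 / r = 1 + 1 / t) :
    ∑' i, (∑' j, k (i - j) * g j) ^ t
      ≤ (∑' x, k x ^ q) ^ (t / q) * (∑' x, g x ^ r) ^ (t / r) := by
  have hq0 : 0 < q := by linarith
  have hr0 : 0 < r := by linarith
  have ht0 : 0 < t := by linarith
  have w1 : 0 ≤ 1 / t := by positivity
  have w2 : 0 ≤ 1 - 1 / r := by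
    have : 1 / r ≤ 1 := by rw [div_le_one hr0]; exact hr.le
    linarith
  have w3 : 0 ≤ 1 - 1 / q := by
    have : 1 / q ≤ 1 := by rw [div_le_one hq0]; exact hq.le
    linarith
  set A := ∑' x, k x ^ q with hA
  set B := ∑' x, g x ^ r with hB
  have shift : ∀ i, ∑' j, k (i - j) ^ q = A := fun i =>
    (Equiv.subLeft i).tsum_eq (fun x => k x ^ q)
  have shift' : ∀ j, ∑' i, k (i - j) ^ q = A := fun j =>
    (Equiv.subRight j).tsum_eq (fun x => k x ^ q)
  have holder : ∀ i, ∑' j, k (i - j) * g j ≤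
      (∑' j, k (i - j) ^ q * g j ^ r) ^ (1 / t) * A ^ (1 - 1 / r) * B ^ (1 - 1 / q) := by
    intro i
    let _ : MeasurableSpace G := ⊤
    have key := ENNReal.lintegral_prod_norm_pow_le (μ := MeasureTheory.Measure.count)
      (Finset.univ : Finset (Fin 3))
      (f := ![fun j => k (i - j) ^ q * g j ^ r, fun j => k (i - j) ^ q, fun j => g j ^ r])
      (p := ![1 / t, 1 - 1 / r, 1 - 1 / q])
      (fun _ _ => measurable_from_top.aemeasurable)
      (by simp only [Fin.sum_univ_three, Matrix.cons_val]; linarith)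
      (by intro n _; fin_cases n <;> simp only [Fin.zero_eta, Fin.mk_one, Fin.reduceFinMk,
            Matrix.cons_val] <;> assumption)
    simp only [Fin.prod_univ_three, Matrix.cons_val, MeasureTheory.lintegral_count, shift] at key
    refine le_trans (le_of_eq (tsum_congr fun j => ?_)) key
    have e1 : (k (i - j) ^ q) ^ (1 / t) * (k (i - j) ^ q) ^ (1 - 1 / r) = k (i - j) := by
      rw [← ENNReal.rpow_add_of_nonneg _ _ w1 w2, ← ENNReal.rpow_mul,
        show 1 / t + (1 - 1 / r) = 1 / q by linarith, mul_one_div_cancel hq0.ne',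
        ENNReal.rpow_one]
    have e2 : (g j ^ r) ^ (1 / t) * (g j ^ r) ^ (1 - 1 / q) = g j := by
      rw [← ENNReal.rpow_add_of_nonneg _ _ w1 w3, ← ENNReal.rpow_mul,
        show 1 / t + (1 - 1 / q) = 1 / r by linarith, mul_one_div_cancel hr0.ne',
        ENNReal.rpow_one]
    rw [ENNReal.mul_rpow_of_nonneg _ _ w1]
    conv_lhs => rw [← e1, ← e2]
    ring
  have fubini : ∑' i, ∑' j, k (i - j) ^ q * g j ^ r = A * B := by
    rw [ENNReal.tsum_comm]
    simp only [ENNReal.tsum_mul_right, shift', ENNReal.tsum_mul_left, hB]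
  calc ∑' i, (∑' j, k (i - j) * g j) ^ t
      ≤ ∑' i, (∑' j, k (i - j) ^ q * g j ^ r) *
          (A ^ ((1 - 1 / r) * t) * B ^ ((1 - 1 / q) * t)) := by
        refine ENNReal.tsum_le_tsum fun i => ?_
        refine (ENNReal.rpow_le_rpow (holder i) ht0.le).trans (le_of_eq ?_)
        rw [ENNReal.mul_rpow_of_nonneg _ _ ht0.le, ENNReal.mul_rpow_of_nonneg _ _ ht0.le,
          ← ENNReal.rpow_mul, ← ENNReal.rpow_mul, ← ENNReal.rpow_mul,
          one_div_mul_cancel ht0.ne', ENNReal.rpow_one, mul_assoc]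
    _ = (A * A ^ ((1 - 1 / r) * t)) * (B * B ^ ((1 - 1 / q) * t)) := by
        rw [ENNReal.tsum_mul_right, fubini]; ring
    _ = A ^ (t / q) * B ^ (t / r) := by
        have tt : 1 / t * t = 1 := one_div_mul_cancel ht0.ne'
        have ea : t / q = 1 + (1 - 1 / r) * t := by
          have := congrArg (· * t) h
          simp only [add_mul, tt] at this
          rw [div_eq_mul_one_div, mul_comm]; linarith
        have eb : t / r = 1 + (1 - 1 / q) * t := by
          have := congrArg (· * t) h
          simp only [add_mul, tt] at this
          rw [div_eq_mul_one_div, mul_comm]; linarith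
        rw [ea, eb, ENNReal.rpow_add_of_nonneg _ _ zero_le_one (by positivity),
          ENNReal.rpow_add_of_nonneg _ _ zero_le_one (by positivity), ENNReal.rpow_one,
          ENNReal.rpow_one]

/-- The kernel `|x|^(-lam)` on `ℤ^N`, set to `0` at the origin so that convolving with it
omits the diagonal term; `ℝ≥0∞`-valued. -/
def hlsKernel {N : ℕ} (lam : ℝ) (x : ZN N) : ℝ≥0∞ :=
  if x = 0 then 0 else ENNReal.ofReal (1 / eudist x 0 ^ lam)

theorem summable_eudist_rpow {N : ℕ} {s : ℝ} (hs : s < -(N : ℝ)) :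
    Summable fun x : ZN N => eudist x 0 ^ s := by
  let b := (EuclideanSpace.basisFun (Fin N) ℝ).toBasis
  let L : Submodule ℤ (EuclideanSpace ℝ (Fin N)) := Submodule.span ℤ (Set.range b)
  have hrank : Module.finrank ℤ L = N := by
    rw [ZLattice.rank ℝ L]; simp
  have hsum := ZLattice.summable_norm_rpow L s (by rw [hrank]; exact hs)
  have hmem : ∀ x : ZN N, WithLp.toLp 2 (fun k => (x k : ℝ)) ∈ L := by
    intro x
    rw [Module.Basis.mem_span_iff_repr_mem]
    intro k
    exact ⟨x k, by simp [b]⟩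
  let φ : ZN N → L := fun x => ⟨WithLp.toLp 2 (fun k => (x k : ℝ)), hmem x⟩
  have hφ : Function.Injective φ := by
    intro x y hxy
    have h1 := congrArg (fun z : L => (z : EuclideanSpace ℝ (Fin N))) hxy
    funext k
    have h2 := congrArg (fun z : EuclideanSpace ℝ (Fin N) => z k) h1
    simpa [φ] using h2
  refine (hsum.comp_injective hφ).congr fun x => ?_
  simp [φ, eudist, EuclideanSpace.norm_eq]

theorem tsum_hlsKernel_rpow_ne_top {N : ℕ} {lam q : ℝ} (hq : 0 < q) (h : (N : ℝ) < lam * q) :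
    ∑' x : ZN N, hlsKernel lam x ^ q ≠ ∞ := by
  have hs := summable_eudist_rpow (N := N) (s := -(lam * q)) (by linarith)
  have hnn : ∀ x : ZN N, 0 ≤ eudist x 0 := fun x => Real.sqrt_nonneg _
  refine ne_top_of_le_ne_top hs.tsum_ofReal_ne_top (ENNReal.tsum_le_tsum fun x => ?_)
  unfold hlsKernel
  split_ifs with hx
  · rw [ENNReal.zero_rpow_of_pos hq]; exact zero_le
  · rw [ENNReal.ofReal_rpow_of_nonneg (by have := hnn x; positivity) hq.le]
    refine le_of_eq (congrArg _ ?_)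
    rw [one_div, ← Real.rpow_neg (hnn x), ← Real.rpow_mul (hnn x), neg_mul]

theorem ofReal_abs_hlsConv_le {N : ℕ} (lam : ℝ) (f : ZN N → ℝ) (i : ZN N) :
    ENNReal.ofReal |hlsConv lam f i|
      ≤ ∑' j, hlsKernel lam (i - j) * ENNReal.ofReal |f j| := by
  rw [← Real.norm_eq_abs, ofReal_norm]
  refine enorm_tsum_le_tsum_enorm.trans (le_of_eq (tsum_congr fun j => ?_))
  have hij : i - j = 0 ↔ j = i := by rw [sub_eq_zero, eq_comm]
  have hd : eudist (i - j) 0 = eudist i j := by simp [eudist]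
  have hnn : 0 ≤ eudist i j ^ lam := Real.rpow_nonneg (Real.sqrt_nonneg _) _
  unfold hlsKernel
  simp only [hij, hd]
  split_ifs with hx
  · simp
  · rw [← ofReal_norm, ← ENNReal.ofReal_mul (by positivity), Real.norm_eq_abs, abs_div,
      abs_of_nonneg hnn]
    congr 1
    ring

/-- the convolution form of the discrete HLS inequality:
`‖|i|^{-λ} ∗ f‖_t ≤ C ‖f‖_r` for `1/r* + λ/N = 1 + 1/t`, `r < r*`. -/
theorem stmt17 (N : ℕ) (r rstar t lam : ℝ) (hr : 1 < r) (hrstar : 1 < rstar)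
    (ht : 1 < t) (hlam0 : 0 < lam) (hlamN : lam < (N : ℝ))
    (hrel : 1 / rstar + lam / (N : ℝ) = 1 + 1 / t) (hrr : r < rstar) :
    ∃ C : ℝ, 0 < C ∧ ∀ f : ZN N → ℝ, Memlp r f →
      lpNorm t (hlsConv lam f) ≤ C * lpNorm r f := by
  have hN : (0 : ℝ) < N := hlam0.trans hlamN
  have hr0 : 0 < r := by linarith
  have ht0 : 0 < t := by linarith
  have hlt1 : lam / (N : ℝ) < 1 := (div_lt_one hN).2 hlamN
  have h1 : 1 / rstar < 1 / r := one_div_lt_one_div_of_lt hr0 hrr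
  have h2 : 1 / r < 1 := (div_lt_one hr0).2 hr
  have h3 : 0 < 1 / t := by positivity
  -- the exponent `q` for which Young's inequality maps `ℓ^r` to `ℓ^t`
  obtain ⟨q, hq⟩ : ∃ q : ℝ, 1 / q = 1 + 1 / t - 1 / r :=
    ⟨1 / (1 + 1 / t - 1 / r), one_div_one_div _⟩
  have hqi : 0 < 1 / q := by rw [hq]; linarith
  have hq0 : 0 < q := one_div_pos.1 hqi
  have hq1 : 1 < q := by
    have : 1 / q < 1 := by rw [hq]; linarith
    rwa [div_lt_one hq0] at this
  have hlq : (N : ℝ) < lam * q := by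
    have : 1 / q < lam / N := by rw [hq]; linarith
    rwa [div_lt_div_iff₀ hq0 hN, one_mul] at this
  have hA := tsum_hlsKernel_rpow_ne_top (N := N) hq0 hlq
  set A := ∑' x : ZN N, hlsKernel lam x ^ q
  refine ⟨A.toReal ^ (1 / q) + 1, by positivity, fun f hf => ?_⟩
  set S := ∑' x, |f x| ^ r
  have hS0 : 0 ≤ S := tsum_nonneg fun x => by positivity
  have hB : ∑' x, ENNReal.ofReal |f x| ^ r = ENNReal.ofReal S := by
    rw [ENNReal.ofReal_tsum_of_nonneg (fun x => by positivity) hf]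
    exact tsum_congr fun x => ENNReal.ofReal_rpow_of_nonneg (abs_nonneg _) hr0.le
  have young := young_tsum (hlsKernel (N := N) lam) (fun j => ENNReal.ofReal |f j|)
    hq1 hr ht (by linarith)
  rw [hB] at young
  have hfin : A ^ (t / q) * ENNReal.ofReal S ^ (t / r) ≠ ∞ :=
    ENNReal.mul_ne_top (ENNReal.rpow_ne_top_of_nonneg (by positivity) hA)
      (ENNReal.rpow_ne_top_of_nonneg (by positivity) ENNReal.ofReal_ne_top)
  have hmain : ∑' i, |hlsConv lam f i| ^ t ≤ A.toReal ^ (t / q) * S ^ (t / r) := by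
    have e : ∑' i, |hlsConv lam f i| ^ t
        = (∑' i, ENNReal.ofReal |hlsConv lam f i| ^ t).toReal := by
      rw [ENNReal.tsum_toReal_eq
        (fun i => ENNReal.rpow_ne_top_of_nonneg ht0.le ENNReal.ofReal_ne_top)]
      refine tsum_congr fun i => ?_
      rw [← ENNReal.toReal_rpow, ENNReal.toReal_ofReal (abs_nonneg _)]
    rw [e]
    refine (ENNReal.toReal_mono hfin ((ENNReal.tsum_le_tsum fun i =>
      ENNReal.rpow_le_rpow (ofReal_abs_hlsConv_le lam f i) ht0.le).trans young)).trans
        (le_of_eq ?_)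
    rw [ENNReal.toReal_mul, ← ENNReal.toReal_rpow, ← ENNReal.toReal_rpow,
      ENNReal.toReal_ofReal hS0]
  calc lpNorm t (hlsConv lam f)
      ≤ (A.toReal ^ (t / q) * S ^ (t / r)) ^ (1 / t) :=
        Real.rpow_le_rpow (tsum_nonneg fun i => by positivity) hmain h3.le
    _ = A.toReal ^ (1 / q) * S ^ (1 / r) := by
        rw [Real.mul_rpow (by positivity) (by positivity),
          ← Real.rpow_mul ENNReal.toReal_nonneg, ← Real.rpow_mul hS0]
        congr 2 <;> field_simp
    _ ≤ (A.toReal ^ (1 / q) + 1) * lpNorm r f := by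
        have : 0 ≤ S ^ (1 / r) := by positivity
        change _ ≤ _ * S ^ (1 / r)
        nlinarith
end
end
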